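/- arXiv:1511.09073 — 2 statements merged into one kernel-verified Lean document; each statement's English description precedes it below -/
import Mathlib

section
/- For every n ≥ 7, every connected P-free 3-graph H on n vertices that contains a copy of the triangle C has at most 3n − 8 edges; moreover |H| = 3n − 8 holds if and only if H is isomorphic to G_1(n) or to G_2(n). -/
/-- A 3-graph: a finite vertex set together with a finite set of edges
(intended to be 3-element subsets of the vertex set). -/
structure ThreeGraph where
  verts : Finset ℕ
  edges : Finset (Finset ℕ)

namespace ThreeGraph

/-- `G` is a genuine 3-uniform hypergraph: every edge is a 3-element subset of the vertex set. -/
def IsValid (G : ThreeGraph) : Prop :=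
  ∀ e ∈ G.edges, e.card = 3 ∧ e ⊆ G.verts

/-- `H.ContainsCopy F` means `F ⊆ H`: there is an injective map of the vertices of `F`
into those of `H` carrying every edge of `F` to an edge of `H`. -/
def ContainsCopy (H F : ThreeGraph) : Prop :=
  ∃ f : ℕ → ℕ, Set.InjOn f ↑F.verts ∧ (∀ v ∈ F.verts, f v ∈ H.verts) ∧
    ∀ e ∈ F.edges, e.image f ∈ H.edges

/-- `H.Free F` : `H` contains no copy of `F`. -/
def Free (H F : ThreeGraph) : Prop := ¬ H.ContainsCopy F

/-- `IsoCopy F H` : `H` is isomorphic to `F`. -/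
def IsoCopy (F H : ThreeGraph) : Prop :=
  ∃ f : ℕ → ℕ, Set.InjOn f ↑F.verts ∧ F.verts.image f = H.verts ∧
    F.edges.image (Finset.image f) = H.edges

/-- Connectivity: any two vertices are joined by a sequence of vertices in which
consecutive ones lie in a common edge. -/
def Connected (G : ThreeGraph) : Prop :=
  ∀ u ∈ G.verts, ∀ v ∈ G.verts,
    Relation.ReflTransGen (fun a b => ∃ e ∈ G.edges, a ∈ e ∧ b ∈ e) u v

/-- Shift all vertices by `k`. -/
def shiftBy (G : ThreeGraph) (k : ℕ) : ThreeGraph :=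
  ⟨G.verts.image (· + k), G.edges.image (Finset.image (· + k))⟩

/-- Vertex-disjoint union of two 3-graphs. -/
def dUnion (G H : ThreeGraph) : ThreeGraph :=
  ⟨G.verts ∪ (H.shiftBy (G.verts.sup id + 1)).verts,
   G.edges ∪ (H.shiftBy (G.verts.sup id + 1)).edges⟩

end ThreeGraph

/-- The loose 3-uniform path of length 3. -/
def pathP : ThreeGraph :=
  ⟨{0,1,2,3,4,5,6}, {{0,1,2},{2,3,4},{4,5,6}}⟩

/-- The triangle `C`. -/
def triangleC : ThreeGraph :=
  ⟨{0,1,2,3,4,5}, {{0,1,2},{2,3,4},{4,5,0}}⟩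

/-- The matching `M`: two disjoint edges. -/
def matchingM : ThreeGraph :=
  ⟨{0,1,2,3,4,5}, {{0,1,2},{3,4,5}}⟩

/-- `P_2`: two edges sharing exactly one vertex. -/
def pairP2 : ThreeGraph :=
  ⟨{0,1,2,3,4}, {{0,1,2},{2,3,4}}⟩

/-- The complete 3-graph `K_n`. -/
def KK (n : ℕ) : ThreeGraph :=
  ⟨Finset.range n, (Finset.range n).powersetCard 3⟩

/-- The full star `S_n` with center `0`. -/
def SS (n : ℕ) : ThreeGraph :=
  ⟨Finset.range n, ((Finset.range n).powersetCard 3).filter (fun e => 0 ∈ e)⟩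

/-- `G_1(n)` with `x,y,z,v = 0,1,2,3`. -/
def G1 (n : ℕ) : ThreeGraph :=
  ⟨Finset.range n,
   insert {0,1,2}
     (((Finset.range n).powersetCard 3).filter
       (fun h => 3 ∈ h ∧ (h ∩ ({0,1,2} : Finset ℕ)).Nonempty))⟩

/-- `G_2(n)` with `x,y,z = 0,1,2`. -/
def G2 (n : ℕ) : ThreeGraph :=
  ⟨Finset.range n,
   insert {0,1,2}
     (((Finset.range n).powersetCard 3).filter
       (fun h => (h ∩ ({0,1,2} : Finset ℕ)).card = 2))⟩

/-- `G_3(n)` with `x,y₁,y₂,z₁,z₂ = 0,1,2,3,4`. -/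
def G3 (n : ℕ) : ThreeGraph :=
  ⟨Finset.range n,
   ((({0,1,2,3,4} : Finset ℕ).powersetCard 3) \ {{1,2,3},{1,2,4}}) ∪
     ((Finset.range n \ ({0,1,2,3,4} : Finset ℕ)).biUnion (fun w => {{0,3,w},{0,4,w}}))⟩

/-- `K_5^{+t}`: `K_5` on `{0,…,4}` with `a,b = 0,1` and `t` pendant edges `{0,1,v}`. -/
def K5plus (t : ℕ) : ThreeGraph :=
  ⟨Finset.range (5 + t),
   ((Finset.range 5).powersetCard 3) ∪ ((Finset.Ico 5 (5 + t)).image (fun v => {0,1,v}))⟩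

/-- The comet `Co(n)`: a `K_4` on `{0,1,2,3}` and a full star on `{0} ∪ {4,…,n-1}`
with center `0`. -/
def comet (n : ℕ) : ThreeGraph :=
  ⟨Finset.range n,
   (({0,1,2,3} : Finset ℕ).powersetCard 3) ∪
     (((insert 0 (Finset.Ico 4 n)).powersetCard 3).filter (fun e => 0 ∈ e))⟩

/-- `W = V(H) \ U`. -/
def Wset (H : ThreeGraph) (U : Finset ℕ) : Finset ℕ := H.verts \ U

/-- `W_0`: the vertices of `W` lying in no edge of `H` entirely contained in `W`. -/
def W0set (H : ThreeGraph) (U : Finset ℕ) : Finset ℕ :=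
  (Wset H U).filter (fun v => ∀ e ∈ H.edges, e ⊆ Wset H U → v ∉ e)

/-- `W_1 = W \ W_0`. -/
def W1set (H : ThreeGraph) (U : Finset ℕ) : Finset ℕ :=
  Wset H U \ W0set H U

/-- `H_1`: the edges of `H` meeting both `U` and `W_1`. -/
def H1set (H : ThreeGraph) (U : Finset ℕ) : Finset (Finset ℕ) :=
  H.edges.filter (fun e => (e ∩ U).Nonempty ∧ (e ∩ W1set H U).Nonempty)

/-- `H[U]`: the edges of `H` entirely contained in `U`. -/
def HUset (H : ThreeGraph) (U : Finset ℕ) : Finset (Finset ℕ) :=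
  H.edges.filter (fun e => e ⊆ U)


def USum (g : ℕ → ℕ) : ℕ :=
  g 7 + g 11 + g 19 + g 35 + g 13 + g 21 + g 37 + g 25 + g 41 + g 49 + g 14 + g 22 + g 38 + g 26 + g 42 + g 50 + g 28 + g 44 + g 52 + g 56

def LSum (g : ℕ → ℕ) : ℕ := g 67 + g 69 + g 70 + g 73 + g 82 + g 100

/-- The mask function `g` has no loose path on the seven vertices `0..6`. -/
def NoPath (g : ℕ → ℕ) : Prop :=
  ∀ a b c d e f k : ℕ, [a, b, c, d, e, f, k].Nodup → (∀ i ∈ [a, b, c, d, e, f, k], i < 7) →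
    g (2 ^ a + 2 ^ b + 2 ^ c) + g (2 ^ c + 2 ^ d + 2 ^ e) + g (2 ^ e + 2 ^ f + 2 ^ k) ≤ 2

set_option maxHeartbeats 4000000 in
theorem core (g : ℕ → ℕ) (g1 : ∀ m, g m ≤ 1) (K : NoPath g)
    (t1 : g 35 = 1) (t2 : g 14 = 1) (t3 : g 21 = 1) (hL : 1 ≤ LSum g) :
    USum g + LSum g ≤ 12 ∨ (USum g + LSum g = 13 ∧ LSum g = 3 ∧
      ((g 67 = 1 ∧ g 69 = 1 ∧ g 70 = 1) ∨ (g 67 = 1 ∧ g 69 = 1 ∧ g 73 = 1) ∨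
       (g 67 = 1 ∧ g 70 = 1 ∧ g 82 = 1) ∨ (g 69 = 1 ∧ g 70 = 1 ∧ g 100 = 1))) := by
  unfold USum LSum at *
  have k0 := K 1 2 3 6 0 4 5 (by decide) (by decide)
  have k1 := K 0 6 3 2 1 4 5 (by decide) (by decide)
  have k2 := K 2 5 1 6 0 3 4 (by decide) (by decide)
  have k3 := K 1 4 3 6 0 2 5 (by decide) (by decide)
  have k4 := K 1 4 0 6 3 2 5 (by decide) (by decide)
  have k5 := K 0 3 1 6 2 4 5 (by decide) (by decide)
  have k6 := K 1 6 0 5 3 2 4 (by decide) (by decide)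
  have k7 := K 0 6 2 1 3 4 5 (by decide) (by decide)
  have k8 := K 0 4 5 3 2 1 6 (by decide) (by decide)
  have k9 := K 0 6 2 4 1 3 5 (by decide) (by decide)
  have k10 := K 2 6 0 5 1 3 4 (by decide) (by decide)
  have k11 := K 1 6 4 0 2 3 5 (by decide) (by decide)
  have k12 := K 0 3 2 6 5 1 4 (by decide) (by decide)
  have k13 := K 1 3 4 0 2 5 6 (by decide) (by decide)
  have k14 := K 0 5 4 3 1 2 6 (by decide) (by decide)
  have k15 := K 0 5 1 6 2 3 4 (by decide) (by decide)
  have k16 := K 0 3 4 6 1 2 5 (by decide) (by decide)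
  have k17 := K 1 3 0 6 2 4 5 (by decide) (by decide)
  have k18 := K 2 6 0 4 1 3 5 (by decide) (by decide)
  have k19 := K 1 4 0 6 2 3 5 (by decide) (by decide)
  have k20 := K 1 6 0 4 2 3 5 (by decide) (by decide)
  have k21 := K 0 5 1 6 4 2 3 (by decide) (by decide)
  have k22 := K 1 6 2 0 4 3 5 (by decide) (by decide)
  have k23 := K 0 4 1 3 2 5 6 (by decide) (by decide)
  have k24 := K 0 5 2 3 1 4 6 (by decide) (by decide)
  have k25 := K 1 6 0 5 2 3 4 (by decide) (by decide)
  have k26 := K 0 6 2 4 5 1 3 (by decide) (by decide)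
  have k27 := K 1 5 0 6 3 2 4 (by decide) (by decide)
  have k28 := K 1 5 3 4 0 2 6 (by decide) (by decide)
  have k29 := K 0 4 3 1 2 5 6 (by decide) (by decide)
  have k30 := K 0 5 2 6 1 3 4 (by decide) (by decide)
  have k31 := K 2 3 1 6 0 4 5 (by decide) (by decide)
  have k32 := K 0 4 2 6 1 3 5 (by decide) (by decide)
  have k33 := K 0 3 2 6 1 4 5 (by decide) (by decide)
  have k34 := K 1 6 2 3 0 4 5 (by decide) (by decide)
  have k35 := K 2 3 0 5 1 4 6 (by decide) (by decide)
  have k36 := K 1 3 2 6 0 4 5 (by decide) (by decide)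
  have k37 := K 0 6 2 3 1 4 5 (by decide) (by decide)
  have k38 := K 2 4 1 5 0 3 6 (by decide) (by decide)
  have k39 := K 0 5 3 2 1 4 6 (by decide) (by decide)
  have k40 := K 2 4 0 6 1 3 5 (by decide) (by decide)
  have k41 := K 0 6 1 5 2 3 4 (by decide) (by decide)
  have k42 := K 0 4 5 6 2 1 3 (by decide) (by decide)
  have k43 := K 1 5 0 6 2 3 4 (by decide) (by decide)
  have k44 := K 1 5 3 6 0 2 4 (by decide) (by decide)
  have k45 := K 1 6 2 4 0 3 5 (by decide) (by decide)
  have k46 := K 0 1 2 6 5 3 4 (by decide) (by decide)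
  have k47 := K 0 3 5 6 2 1 4 (by decide) (by decide)
  have k48 := K 0 4 2 6 5 1 3 (by decide) (by decide)
  have k49 := K 1 3 0 4 2 5 6 (by decide) (by decide)
  have k50 := K 2 6 1 3 0 4 5 (by decide) (by decide)
  have k51 := K 2 4 1 6 0 3 5 (by decide) (by decide)
  have k52 := K 1 5 2 6 0 3 4 (by decide) (by decide)
  have k53 := K 0 1 5 6 2 3 4 (by decide) (by decide)
  have k54 := K 0 6 1 5 4 2 3 (by decide) (by decide)
  have k55 := K 0 6 1 2 3 4 5 (by decide) (by decide)
  have k56 := K 2 6 1 5 0 3 4 (by decide) (by decide)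
  have k57 := K 0 2 1 6 4 3 5 (by decide) (by decide)
  have k58 := K 0 2 4 6 1 3 5 (by decide) (by decide)
  have k59 := K 1 4 2 6 0 3 5 (by decide) (by decide)
  have k60 := K 0 4 1 6 2 3 5 (by decide) (by decide)
  have k61 := K 2 5 0 6 1 3 4 (by decide) (by decide)
  have k62 := K 1 5 2 4 0 3 6 (by decide) (by decide)
  have k63 := K 0 3 1 6 4 2 5 (by decide) (by decide)
  have k64 := K 0 6 3 1 2 4 5 (by decide) (by decide)
  have k65 := K 1 2 0 6 3 4 5 (by decide) (by decide)
  have k66 := K 0 5 4 6 1 2 3 (by decide) (by decide)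
  have k67 := K 0 6 1 3 2 4 5 (by decide) (by decide)
  have k68 := K 2 3 0 6 1 4 5 (by decide) (by decide)
  norm_num [t1, t2, t3] at k0 k1 k2 k3 k4 k5 k6 k7 k8 k9 k10 k11 k12 k13 k14 k15 k16 k17 k18 k19 k20 k21 k22 k23 k24 k25 k26 k27 k28 k29 k30 k31 k32 k33 k34 k35 k36 k37 k38 k39 k40 k41 k42 k43 k44 k45 k46 k47 k48 k49 k50 k51 k52 k53 k54 k55 k56 k57 k58 k59 k60 k61 k62 k63 k64 k65 k66 k67 k68
  have b7 := g1 7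
  have b11 := g1 11
  have b19 := g1 19
  have b13 := g1 13
  have b37 := g1 37
  have b25 := g1 25
  have b41 := g1 41
  have b49 := g1 49
  have b22 := g1 22
  have b38 := g1 38
  have b26 := g1 26
  have b42 := g1 42
  have b50 := g1 50
  have b28 := g1 28
  have b44 := g1 44
  have b52 := g1 52
  have b56 := g1 56
  have b67 := g1 67
  have b69 := g1 69
  have b70 := g1 70
  have b73 := g1 73
  have b82 := g1 82
  have b100 := g1 100
  generalize g 7 = h7 at *
  generalize g 11 = h11 at *
  generalize g 19 = h19 at *
  generalize g 13 = h13 at *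
  generalize g 37 = h37 at *
  generalize g 25 = h25 at *
  generalize g 41 = h41 at *
  generalize g 49 = h49 at *
  generalize g 22 = h22 at *
  generalize g 38 = h38 at *
  generalize g 26 = h26 at *
  generalize g 42 = h42 at *
  generalize g 50 = h50 at *
  generalize g 28 = h28 at *
  generalize g 44 = h44 at *
  generalize g 52 = h52 at *
  generalize g 56 = h56 at *
  generalize g 67 = h67 at *
  generalize g 69 = h69 at *
  generalize g 70 = h70 at *
  generalize g 73 = h73 at *
  generalize g 82 = h82 at *
  generalize g 100 = h100 at *
  rw [t1, t2, t3]
  clear t1 t2 t3 K g1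
  have c67 : h67 = 0 ∨ h67 = 1 := by omega
  have c69 : h69 = 0 ∨ h69 = 1 := by omega
  have c70 : h70 = 0 ∨ h70 = 1 := by omega
  have c73 : h73 = 0 ∨ h73 = 1 := by omega
  have c82 : h82 = 0 ∨ h82 = 1 := by omega
  have c100 : h100 = 0 ∨ h100 = 1 := by omega
  rcases c67 with rfl | rfl <;> rcases c69 with rfl | rfl <;> rcases c70 with rfl | rfl <;> rcases c73 with rfl | rfl <;> rcases c82 with rfl | rfl <;> rcases c100 with rfl | rfl <;> omega

def UMasks : Finset ℕ := {7, 11, 19, 35, 13, 21, 37, 25, 41, 49, 14, 22, 38, 26, 42, 50, 28, 44, 52, 56}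
def LMasks : Finset ℕ := {67, 69, 70, 73, 82, 100}

theorem coreT (g : ℕ → ℕ) (K : NoPath g)
    (t1 : g 35 = 1) (t2 : g 14 = 1) (t3 : g 21 = 1)
    (l1 : g 67 = 1) (l2 : g 69 = 1) (l3 : g 70 = 1) :
    ∀ m ∈ UMasks, g m = 1 → m ∈ ({7, 11, 13, 14, 19, 21, 22, 35, 37, 38} : Finset ℕ) := by
  have k0 := K 2 6 1 5 0 3 4 (by decide) (by decide)
  have k1 := K 2 6 0 5 1 3 4 (by decide) (by decide)
  have k2 := K 0 5 1 6 2 3 4 (by decide) (by decide)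
  have k3 := K 1 6 2 4 0 3 5 (by decide) (by decide)
  have k4 := K 0 4 2 6 1 3 5 (by decide) (by decide)
  have k5 := K 1 6 0 4 2 3 5 (by decide) (by decide)
  have k6 := K 1 3 2 6 0 4 5 (by decide) (by decide)
  have k7 := K 0 6 2 3 1 4 5 (by decide) (by decide)
  have k8 := K 0 6 1 3 2 4 5 (by decide) (by decide)
  have k9 := K 0 6 1 2 3 4 5 (by decide) (by decide)
  norm_num [t1, t2, t3, l1, l2, l3] at k0 k1 k2 k3 k4 k5 k6 k7 k8 k9
  intro m hm h
  fin_cases hm <;> first | decide | (exfalso; omega)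

theorem coreS (g : ℕ → ℕ) (K : NoPath g)
    (t1 : g 35 = 1) (t2 : g 14 = 1) (t3 : g 21 = 1)
    (l1 : g 67 = 1) (l2 : g 69 = 1) (l3 : g 73 = 1) :
    ∀ m ∈ UMasks, g m = 1 → m ∈ ({7, 11, 13, 14, 19, 21, 25, 35, 37, 41} : Finset ℕ) := by
  have k0 := K 2 4 1 5 0 3 6 (by decide) (by decide)
  have k1 := K 2 6 0 5 1 3 4 (by decide) (by decide)
  have k2 := K 1 5 0 6 2 3 4 (by decide) (by decide)
  have k3 := K 1 5 2 4 0 3 6 (by decide) (by decide)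
  have k4 := K 1 5 3 6 0 2 4 (by decide) (by decide)
  have k5 := K 1 6 0 4 2 3 5 (by decide) (by decide)
  have k6 := K 1 2 3 6 0 4 5 (by decide) (by decide)
  have k7 := K 0 6 2 3 1 4 5 (by decide) (by decide)
  have k8 := K 0 6 1 3 2 4 5 (by decide) (by decide)
  have k9 := K 0 6 1 2 3 4 5 (by decide) (by decide)
  norm_num [t1, t2, t3, l1, l2, l3] at k0 k1 k2 k3 k4 k5 k6 k7 k8 k9
  intro m hm h
  fin_cases hm <;> first | decide | (exfalso; omega)

theorem USum_eq (g : ℕ → ℕ) : USum g = ∑ m ∈ UMasks, g m := by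
  unfold USum UMasks
  repeat rw [Finset.sum_insert (by decide)]
  rw [Finset.sum_singleton]
  simp only [add_assoc]

theorem LSum_eq (g : ℕ → ℕ) : LSum g = ∑ m ∈ LMasks, g m := by
  unfold LSum LMasks
  repeat rw [Finset.sum_insert (by decide)]
  rw [Finset.sum_singleton]
  simp only [add_assoc]

/-- extend the labelling `v` of the six triangle vertices by `6 ↦ w`. -/
def vv (v : ℕ → ℕ) (w : ℕ) : ℕ → ℕ := fun i => if i = 6 then w else v i

/-- bits of a mask -/
def bits (m : ℕ) : Finset ℕ := (Finset.range 7).filter (fun i => m.testBit i = true)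

def Smask (u : ℕ → ℕ) (m : ℕ) : Finset ℕ := (bits m).image u

def gg (E : Finset (Finset ℕ)) (u : ℕ → ℕ) (m : ℕ) : ℕ := if Smask u m ∈ E then 1 else 0

theorem gg_le (E : Finset (Finset ℕ)) (u : ℕ → ℕ) (m : ℕ) : gg E u m ≤ 1 := by
  unfold gg; split_ifs <;> omega

theorem three_one {x y z : ℕ} (hx : x ≤ 1) (hy : y ≤ 1) (hz : z ≤ 1) (h : ¬ x + y + z ≤ 2) :
    x = 1 ∧ y = 1 ∧ z = 1 := by omega

theorem two_one {x y : ℕ} (hx : x ≤ 1) (hy : y ≤ 1) (h : ¬ x + y ≤ 1) :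
    x = 1 ∧ y = 1 := by omega

theorem gg_one (E : Finset (Finset ℕ)) (u : ℕ → ℕ) (m : ℕ) : gg E u m = 1 ↔ Smask u m ∈ E := by
  unfold gg; split_ifs <;> simp_all

theorem bits_eq : ∀ a ∈ Finset.range 7, ∀ b ∈ Finset.range 7, ∀ c ∈ Finset.range 7,
    a ≠ b → a ≠ c → b ≠ c → bits (2 ^ a + 2 ^ b + 2 ^ c) = {a, b, c} := by
  decide +kernel

theorem SS_eq (u : ℕ → ℕ) (a b c : ℕ) (ha : a < 7) (hb : b < 7) (hc : c < 7)
    (hab : a ≠ b) (hac : a ≠ c) (hbc : b ≠ c) :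
    Smask u (2 ^ a + 2 ^ b + 2 ^ c) = {u a, u b, u c} := by
  unfold Smask
  rw [bits_eq a (by simpa) b (by simpa) c (by simpa) hab hac hbc]
  simp

/-- no loose path, concretely -/
def PF (E : Finset (Finset ℕ)) : Prop :=
  ∀ a b c d e f k : ℕ, [a, b, c, d, e, f, k].Nodup → {a, b, c} ∈ E → {c, d, e} ∈ E →
    {e, f, k} ∈ E → False

theorem PF_of_free (H : ThreeGraph) (hval : H.IsValid) (hP : H.Free pathP) : PF H.edges := by
  intro a b c d e f k hnd h1 h2 h3
  apply hP
  refine ⟨fun i => [a, b, c, d, e, f, k].getD i 0, ?_, ?_, ?_⟩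
  · intro i hi j hj hij
    simp only [pathP, Finset.coe_insert, Finset.coe_singleton, Set.mem_insert_iff,
      Set.mem_singleton_iff] at hi hj
    have hi' : i < [a, b, c, d, e, f, k].length := by simp only [List.length_cons]; omega
    have hj' : j < [a, b, c, d, e, f, k].length := by simp only [List.length_cons]; omega
    have hij' : [a, b, c, d, e, f, k].getD i 0 = [a, b, c, d, e, f, k].getD j 0 := hij
    rw [List.getD_eq_getElem _ _ hi', List.getD_eq_getElem _ _ hj'] at hij'
    exact hnd.getElem_inj_iff.1 hij'
  · have m1 := (hval _ h1).2
    have m2 := (hval _ h2).2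
    have m3 := (hval _ h3).2
    simp only [Finset.insert_subset_iff, Finset.singleton_subset_iff] at m1 m2 m3
    intro i hi
    simp only [pathP, Finset.mem_insert, Finset.mem_singleton] at hi
    rcases hi with rfl | rfl | rfl | rfl | rfl | rfl | rfl <;> simp <;> tauto
  · intro t ht
    simp only [pathP, Finset.mem_insert, Finset.mem_singleton] at ht
    rcases ht with rfl | rfl | rfl <;> simpa [Finset.image_insert]

def triIdx : Finset (Finset ℕ) := {{0, 1, 5}, {1, 2, 3}, {0, 2, 4}}

structure Su (V : Finset ℕ) (E : Finset (Finset ℕ)) (v : ℕ → ℕ) : Prop where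
  inj : ∀ i < 6, ∀ j < 6, v i = v j → i = j
  mem : ∀ i < 6, v i ∈ V
  val : ∀ e ∈ E, e.card = 3 ∧ e ⊆ V
  pf : PF E
  tri : ∀ t ∈ triIdx, t.image v ∈ E
  con : ∀ u ∈ V, ∀ w ∈ V, Relation.ReflTransGen (fun a b => ∃ e ∈ E, a ∈ e ∧ b ∈ e) u w

def UU (v : ℕ → ℕ) : Finset ℕ := (Finset.range 6).image v

theorem mem_UU {v : ℕ → ℕ} {w : ℕ} : w ∈ UU v ↔ ∃ i < 6, v i = w := by
  simp [UU]

theorem Su.nopath {V E v} (h : Su V E v) {w : ℕ} (hw : w ∉ UU v) : NoPath (gg E (vv v w)) := by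
  intro a b c d e f k hnd hlt
  by_contra hcon
  obtain ⟨j1, j2, j3⟩ := three_one (gg_le _ _ _) (gg_le _ _ _) (gg_le _ _ _) hcon
  clear hcon
  have hinj : ∀ x ∈ [a, b, c, d, e, f, k], ∀ y ∈ [a, b, c, d, e, f, k],
      vv v w x = vv v w y → x = y := by
    intro x hx y hy hxy
    have hx := hlt x hx
    have hy := hlt y hy
    unfold vv at hxy
    rw [mem_UU] at hw
    push Not at hw
    split_ifs at hxy with p q q
    · omega
    · exact absurd hxy.symm (hw y (by omega))
    · exact absurd hxy (hw x (by omega))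
    · exact h.inj x (by omega) y (by omega) hxy
  have hnd2 := List.Nodup.map_on hinj hnd
  simp only [List.nodup_cons, List.mem_cons, List.not_mem_nil, or_false, not_or,
      List.nodup_nil, not_false_eq_true, and_true] at hnd
  simp only [List.mem_cons, List.not_mem_nil, or_false, forall_eq_or_imp, forall_eq] at hlt
  rw [gg_one] at j1 j2 j3
  obtain ⟨⟨_, _, _, _, _, _⟩, ⟨_, _, _, _, _⟩, ⟨_, _, _, _⟩, ⟨_, _, _⟩, ⟨_, _⟩, _⟩ := hnd
  obtain ⟨_, _, _, _, _, _, _⟩ := hlt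
  rw [SS_eq] at j1 j2 j3 <;> try assumption
  exact h.pf _ _ _ _ _ _ _ hnd2 j1 j2 j3

theorem Su.tri' {V E v} (h : Su V E v) (i j k : ℕ) (ht : ({i, j, k} : Finset ℕ) ∈ triIdx) :
    {v i, v j, v k} ∈ E := by
  have := h.tri _ ht
  simpa [Finset.image_insert] using this

theorem dec1 : ∀ i ∈ Finset.range 6, ∃ a ∈ Finset.range 6, ∃ b ∈ Finset.range 6,
    ∃ c ∈ Finset.range 6, ∃ d ∈ Finset.range 6, [i, a, b, c, d].Nodup ∧
    ({i, a, b} : Finset ℕ) ∈ triIdx ∧ ({b, c, d} : Finset ℕ) ∈ triIdx := by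
  decide +kernel

theorem dec2 : ∀ i ∈ Finset.range 6, ∀ j ∈ Finset.range 6, i ≠ j → ∃ k ∈ Finset.range 6,
    ∃ l ∈ Finset.range 6, [i, j, k, l].Nodup ∧
    (({i, k, l} : Finset ℕ) ∈ triIdx ∨ ({j, k, l} : Finset ℕ) ∈ triIdx) := by
  decide +kernel

theorem dec3 : ∀ i ∈ Finset.range 6, ∀ j ∈ Finset.range 6, i ≠ j →
    (∃ m ∈ LMasks, bits m = {6, i, j}) ∨
    ∃ a ∈ Finset.range 6, ∃ b ∈ Finset.range 6,
    ∃ c ∈ Finset.range 6, ∃ d ∈ Finset.range 6, [i, j, a, b, c, d].Nodup ∧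
    (({i, a, b} : Finset ℕ) ∈ triIdx ∨ ({j, a, b} : Finset ℕ) ∈ triIdx) ∧
    ({b, c, d} : Finset ℕ) ∈ triIdx := by
  decide +kernel

theorem dec4 : ∀ t ∈ Finset.powersetCard 3 (Finset.range 6), ∃ m ∈ UMasks, bits m = t := by
  decide +kernel

/-- pushing index lists through `v`. -/
theorem Su.nd {V E v} (h : Su V E v) (l : List ℕ) (hl : l.Nodup) (hlt : ∀ i ∈ l, i < 6) :
    (l.map v).Nodup :=
  List.Nodup.map_on (fun x hx y hy => h.inj x (hlt x hx) y (hlt y hy)) hl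

/-- no edge meets the triangle in exactly one vertex -/
theorem Su.no1 {V E v} (h : Su V E v) (i : ℕ) (hi : i < 6) (w w' : ℕ) (hw : w ∉ UU v)
    (hw' : w' ∉ UU v) (hne : w ≠ w') (he : {w, w', v i} ∈ E) : False := by
  obtain ⟨a, ha, b, hb, c, hc, d, hd, hnd, h1, h2⟩ := dec1 i (by simpa)
  simp only [Finset.mem_range] at ha hb hc hd
  have hnd2 := h.nd _ hnd (by simp; omega)
  refine h.pf w w' (v i) (v a) (v b) (v c) (v d) ?_ he (h.tri' _ _ _ h1) (h.tri' _ _ _ h2)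
  rw [mem_UU] at hw hw'
  push Not at hw hw'
  simp only [List.map_cons, List.map_nil] at hnd2
  rw [List.nodup_cons, List.nodup_cons]
  refine ⟨?_, ?_, hnd2⟩
  · simp only [List.mem_cons, List.not_mem_nil, or_false, not_or]
    exact ⟨hne, (hw i hi).symm, (hw a ha).symm, (hw b hb).symm, (hw c hc).symm, (hw d hd).symm⟩
  · simp only [List.mem_cons, List.not_mem_nil, or_false, not_or]
    exact ⟨(hw' i hi).symm, (hw' a ha).symm, (hw' b hb).symm, (hw' c hc).symm, (hw' d hd).symm⟩

/-- an edge containing three given distinct elements -/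
theorem eq_triple {e : Finset ℕ} (hc : e.card = 3) {a b : ℕ} (ha : a ∈ e) (hb : b ∈ e)
    (hab : a ≠ b) : ∃ c, c ≠ a ∧ c ≠ b ∧ e = {a, b, c} := by
  have h1 : ((e.erase a).erase b).card = 1 := by
    rw [Finset.card_erase_of_mem (Finset.mem_erase.2 ⟨hab.symm, hb⟩),
      Finset.card_erase_of_mem ha, hc]
  obtain ⟨c, hc'⟩ := Finset.card_eq_one.1 h1
  have hcm : c ∈ (e.erase a).erase b := by rw [hc']; simp
  simp only [Finset.mem_erase] at hcm
  refine ⟨c, hcm.2.1, hcm.1, ?_⟩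
  rw [← Finset.insert_erase ha, ← Finset.insert_erase (Finset.mem_erase.2 ⟨hab.symm, hb⟩), hc']

/-- an edge through `w` outside `U` that meets `U` has the form `{w, v i, v j}`. -/
theorem Su.form {V E v} (h : Su V E v) {e : Finset ℕ} (he : e ∈ E) {w : ℕ} (hwe : w ∈ e)
    (hw : w ∉ UU v) {i : ℕ} (hi : i < 6) (hie : v i ∈ e) :
    ∃ j < 6, i ≠ j ∧ e = {w, v i, v j} := by
  have hne : w ≠ v i := by
    rintro rfl
    exact hw (mem_UU.2 ⟨i, hi, rfl⟩)
  obtain ⟨c, hc1, hc2, rfl⟩ := eq_triple (h.val _ he).1 hwe hie hne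
  by_cases hcU : c ∈ UU v
  · obtain ⟨j, hj, rfl⟩ := mem_UU.1 hcU
    refine ⟨j, hj, ?_, rfl⟩
    rintro rfl
    exact hc2 rfl
  · exfalso
    refine h.no1 i hi w c hw hcU hc1.symm ?_
    rwa [Finset.pair_comm c]

theorem Su.noX {V E v} (h : Su V E v) {e e' : Finset ℕ} (he : e ∈ E) (he' : e' ∈ E) {a : ℕ}
    (hae : a ∈ e) (hae' : a ∈ e') (hd : ∀ i < 6, v i ∉ e') (i : ℕ) (hi : i < 6)
    (hie : v i ∈ e) : False := by
  have haU : a ∉ UU v := by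
    intro hh
    obtain ⟨j, hj, rfl⟩ := mem_UU.1 hh
    exact hd j hj hae'
  obtain ⟨j, hj, hij, rfl⟩ := h.form he hae haU hi hie
  have hc3 := (h.val _ he').1
  obtain ⟨p, hp, hpa⟩ := Finset.exists_mem_ne (s := e') (by omega) a
  obtain ⟨q, hq1, hq2, rfl⟩ := eq_triple hc3 hp hae' hpa
  have key : ∀ i j k l : ℕ, i < 6 → j < 6 → k < 6 → l < 6 → [i, j, k, l].Nodup →
      {a, v i, v j} ∈ E → ({j, k, l} : Finset ℕ) ∈ triIdx → False := by
    intro i j k l hi hj hk hl hnd h1 h2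
    have hnd2 := h.nd _ hnd (by simp; omega)
    simp only [List.map_cons, List.map_nil] at hnd2
    refine h.pf p q a (v i) (v j) (v k) (v l) ?_ ?_ h1 (h.tri' _ _ _ h2)
    · have ea := hd i hi
      have eb := hd j hj
      have ec := hd k hk
      have ed := hd l hl
      simp only [Finset.mem_insert, Finset.mem_singleton, not_or] at ea eb ec ed
      rw [List.nodup_cons, List.nodup_cons, List.nodup_cons]
      simp only [List.mem_cons, List.not_mem_nil, or_false, not_or]
      refine ⟨⟨fun hh => hq1 hh.symm, hpa, ?_⟩, ⟨hq2, ?_⟩, ?_, hnd2⟩ <;>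
      refine ⟨fun hh => ?_, fun hh => ?_, fun hh => ?_, fun hh => ?_⟩ <;> subst hh <;> simp_all
    · rwa [Finset.pair_comm q]
  obtain ⟨k, hk, l, hl, hnd, h1 | h1⟩ := dec2 i (by simpa) j (by simpa) hij
  · refine key j i k l hj hi (by simpa using hk) (by simpa using hl) ?_ ?_ h1
    · simp only [List.nodup_cons, List.mem_cons, List.not_mem_nil, or_false, not_or,
        List.nodup_nil, not_false_eq_true, and_true] at hnd ⊢
      omega
    · rwa [Finset.pair_comm (v j)]
  · exact key i j k l hi hj (by simpa using hk) (by simpa using hl) hnd he h1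

/-- every vertex lies in `U` or on an edge meeting `U`. -/
theorem Su.reach {V E v} (h : Su V E v) {w : ℕ} (hw : w ∈ V) :
    w ∈ UU v ∨ ∃ e ∈ E, w ∈ e ∧ ∃ i < 6, v i ∈ e := by
  have hr := h.con (v 0) (h.mem 0 (by omega)) w hw
  induction hr with
  | refl => exact Or.inl (mem_UU.2 ⟨0, by omega, rfl⟩)
  | tail hab hbc ih =>
    rename_i b c
    obtain ⟨e', he', hb, hc⟩ := hbc
    right
    refine ⟨e', he', hc, ?_⟩
    by_contra hno
    push Not at hno
    have hbV := (h.val _ he').2 hb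
    rcases ih hbV with h1 | ⟨e, he, hbe, i, hi, hie⟩
    · obtain ⟨i, hi, rfl⟩ := mem_UU.1 h1
      exact hno i hi hb
    · exact h.noX he he' hbe hb hno i hi hie

theorem Su.meets {V E v} (h : Su V E v) {e : Finset ℕ} (he : e ∈ E) : ∃ i < 6, v i ∈ e := by
  by_contra hno
  push Not at hno
  have hc := (h.val _ he).1
  obtain ⟨a, ha⟩ := Finset.card_pos.1 (by omega : 0 < e.card)
  rcases h.reach ((h.val _ he).2 ha) with h1 | ⟨e', he', hbe, i, hi, hie⟩
  · obtain ⟨i, hi, rfl⟩ := mem_UU.1 h1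
    exact hno i hi ha
  · exact h.noX he' he hbe ha hno i hi hie

theorem vv_lt (v : ℕ → ℕ) (w i : ℕ) (hi : i < 6) : vv v w i = v i := by
  unfold vv; rw [if_neg (by omega)]

/-- edges through an outside vertex are given by one of six masks. -/
theorem Su.outside {V E v} (h : Su V E v) {e : Finset ℕ} (he : e ∈ E) {w : ℕ} (hwe : w ∈ e)
    (hw : w ∉ UU v) : ∃ m ∈ LMasks, Smask (vv v w) m = e := by
  obtain ⟨i, hi, hie⟩ := h.meets he
  obtain ⟨j, hj, hij, rfl⟩ := h.form he hwe hw hi hie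
  rcases dec3 i (by simpa) j (by simpa) hij with ⟨m, hm, hb⟩ |
    ⟨a, ha, b, hb, c, hc, d, hd, hnd, h1, h2⟩
  · refine ⟨m, hm, ?_⟩
    rw [Smask, hb]
    simp [Finset.image_insert, vv_lt v w i hi, vv_lt v w j hj]
    simp [vv]
  · exfalso
    simp only [Finset.mem_range] at ha hb hc hd
    have key : ∀ i j : ℕ, i < 6 → j < 6 → [i, j, a, b, c, d].Nodup →
        {w, v i, v j} ∈ E → ({j, a, b} : Finset ℕ) ∈ triIdx → False := by
      intro i j hi hj hnd he h1
      have hnd2 := h.nd _ hnd (by simp; omega)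
      simp only [List.map_cons, List.map_nil] at hnd2
      refine h.pf w (v i) (v j) (v a) (v b) (v c) (v d) ?_ he (h.tri' _ _ _ h1)
        (h.tri' _ _ _ h2)
      rw [mem_UU] at hw
      push Not at hw
      rw [List.nodup_cons]
      refine ⟨?_, hnd2⟩
      simp only [List.mem_cons, List.not_mem_nil, or_false, not_or]
      exact ⟨(hw i hi).symm, (hw j hj).symm, (hw a ha).symm, (hw b hb).symm, (hw c hc).symm,
        (hw d hd).symm⟩
    rcases h1 with h1 | h1
    · refine key j i hj hi ?_ ?_ h1
      · simp only [List.nodup_cons, List.mem_cons, List.not_mem_nil, or_false, not_or,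
          List.nodup_nil, not_false_eq_true, and_true] at hnd ⊢
        omega
      · rwa [Finset.pair_comm (v j)]
    · exact key i j hi hj hnd he h1

theorem Su.inside {V E v} (h : Su V E v) {e : Finset ℕ} (he : e ∈ E) (hU : e ⊆ UU v) :
    ∃ m ∈ UMasks, Smask v m = e := by
  have himg : ((Finset.range 6).filter (fun i => v i ∈ e)).image v = e := by
    ext x
    simp only [Finset.mem_image, Finset.mem_filter, Finset.mem_range]
    constructor
    · rintro ⟨i, ⟨_, h2⟩, rfl⟩
      exact h2
    · intro hx
      obtain ⟨i, hi, rfl⟩ := mem_UU.1 (hU hx)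
      exact ⟨i, ⟨hi, hx⟩, rfl⟩
  have hcard : ((Finset.range 6).filter (fun i => v i ∈ e)).card = 3 := by
    rw [← (h.val _ he).1, ← Finset.card_image_of_injOn (f := v), himg]
    intro x hx y hy hxy
    simp only [Finset.coe_filter, Finset.mem_range, Set.mem_ofPred_eq] at hx hy
    exact h.inj x hx.1 y hy.1 hxy
  obtain ⟨m, hm, hb⟩ := dec4 _ (Finset.mem_powersetCard.2 ⟨Finset.filter_subset _ _, hcard⟩)
  exact ⟨m, hm, by rw [Smask, hb, himg]⟩

theorem UMasks_lt : ∀ m ∈ UMasks, ∀ i ∈ bits m, i < 6 := by decide +kernel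

theorem SS_vv (v : ℕ → ℕ) (w m : ℕ) (hm : m ∈ UMasks) : Smask (vv v w) m = Smask v m := by
  unfold Smask
  apply Finset.image_congr
  intro i hi
  exact vv_lt v w i (UMasks_lt m hm i hi)

theorem gg_vv (E : Finset (Finset ℕ)) (v : ℕ → ℕ) (w m : ℕ) (hm : m ∈ UMasks) :
    gg E (vv v w) m = gg E v m := by
  unfold gg; rw [SS_vv v w m hm]

theorem USum_vv (E : Finset (Finset ℕ)) (v : ℕ → ℕ) (w : ℕ) :
    USum (gg E (vv v w)) = USum (gg E v) := by
  rw [USum_eq, USum_eq]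
  exact Finset.sum_congr rfl (fun m hm => gg_vv E v w m hm)

theorem card_masks (E : Finset (Finset ℕ)) (u : ℕ → ℕ) (M : Finset ℕ) :
    ((M.image (Smask u)).filter (· ∈ E)).card ≤ ∑ m ∈ M, gg E u m := by
  rw [Finset.filter_image]
  refine Finset.card_image_le.trans ?_
  rw [Finset.card_filter]
  rfl

theorem Su.count {V E v} (h : Su V E v) :
    E.card ≤ USum (gg E v) + ∑ w ∈ V \ UU v, LSum (gg E (vv v w)) := by
  have hsub : E ⊆ ((UMasks.image (Smask v)).filter (· ∈ E)) ∪
      (V \ UU v).biUnion (fun w => (LMasks.image (Smask (vv v w))).filter (· ∈ E)) := by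
    intro e he
    by_cases hU : e ⊆ UU v
    · obtain ⟨m, hm, rfl⟩ := h.inside he hU
      exact Finset.mem_union_left _ (Finset.mem_filter.2 ⟨Finset.mem_image_of_mem _ hm, he⟩)
    · obtain ⟨w, hwe, hw⟩ := Finset.not_subset.1 hU
      obtain ⟨m, hm, hme⟩ := h.outside he hwe hw
      refine Finset.mem_union_right _ (Finset.mem_biUnion.2 ⟨w, ?_, ?_⟩)
      · exact Finset.mem_sdiff.2 ⟨(h.val _ he).2 hwe, hw⟩
      · refine Finset.mem_filter.2 ⟨?_, he⟩
        rw [← hme]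
        exact Finset.mem_image_of_mem _ hm
  refine (Finset.card_le_card hsub).trans ((Finset.card_union_le _ _).trans ?_)
  refine Nat.add_le_add ?_ (Finset.card_biUnion_le.trans (Finset.sum_le_sum ?_))
  · rw [USum_eq]; exact card_masks _ _ _
  · intro w _
    rw [LSum_eq]; exact card_masks _ _ _

theorem Su.Lpos {V E v} (h : Su V E v) {w : ℕ} (hw : w ∈ V \ UU v) :
    1 ≤ LSum (gg E (vv v w)) := by
  rw [Finset.mem_sdiff] at hw
  rcases h.reach hw.1 with h1 | ⟨e, he, hwe, _⟩
  · exact absurd h1 hw.2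
  · obtain ⟨m, hm, hme⟩ := h.outside he hwe hw.2
    rw [LSum_eq]
    have : gg E (vv v w) m = 1 := by rw [gg_one, hme]; exact he
    rw [← this]
    exact Finset.single_le_sum (f := gg E (vv v w)) (fun _ _ => Nat.zero_le _) hm

theorem tri_masks : bits 35 = {0, 1, 5} ∧ bits 14 = {1, 2, 3} ∧ bits 21 = {0, 2, 4} := by
  decide +kernel

theorem Su.tris {V E v} (h : Su V E v) (w : ℕ) :
    gg E (vv v w) 35 = 1 ∧ gg E (vv v w) 14 = 1 ∧ gg E (vv v w) 21 = 1 := by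
  rw [gg_vv _ _ _ _ (by decide), gg_vv _ _ _ _ (by decide), gg_vv _ _ _ _ (by decide)]
  simp only [gg_one, Smask, tri_masks.1, tri_masks.2.1, tri_masks.2.2]
  exact ⟨h.tri _ (by decide), h.tri _ (by decide), h.tri _ (by decide)⟩

theorem Su.core {V E v} (h : Su V E v) {w : ℕ} (hw : w ∈ V \ UU v) :
    let g := gg E (vv v w)
    USum (gg E v) + LSum g ≤ 12 ∨ (USum (gg E v) + LSum g = 13 ∧ LSum g = 3 ∧
      ((g 67 = 1 ∧ g 69 = 1 ∧ g 70 = 1) ∨ (g 67 = 1 ∧ g 69 = 1 ∧ g 73 = 1) ∨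
       (g 67 = 1 ∧ g 70 = 1 ∧ g 82 = 1) ∨ (g 69 = 1 ∧ g 70 = 1 ∧ g 100 = 1))) := by
  obtain ⟨t1, t2, t3⟩ := h.tris w
  have := _root_.core (gg E (vv v w)) (gg_le _ _) (h.nopath (Finset.mem_sdiff.1 hw).2) t1 t2 t3
    (h.Lpos hw)
  rwa [USum_vv] at this

/-- two outside vertices -/
theorem Su.excl {V E v} (h : Su V E v) {w w' : ℕ} (hw : w ∉ UU v) (hw' : w' ∉ UU v)
    (hne : w ≠ w') (a b k c d : ℕ) (hnd : [a, b, k, c, d].Nodup)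
    (hlt : ∀ i ∈ [a, b, k, c, d], i < 6) (ht : ({b, k, c} : Finset ℕ) ∈ triIdx) :
    gg E (vv v w) (2 ^ 6 + 2 ^ a + 2 ^ b) + gg E (vv v w') (2 ^ c + 2 ^ d + 2 ^ 6) ≤ 1 := by
  by_contra hcon
  obtain ⟨j1, j2⟩ := two_one (gg_le _ _ _) (gg_le _ _ _) hcon
  clear hcon
  have hnd2 := h.nd _ hnd hlt
  simp only [List.map_cons, List.map_nil] at hnd2
  have hnd' := hnd
  simp only [List.nodup_cons, List.mem_cons, List.not_mem_nil, or_false, not_or,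
      List.nodup_nil, not_false_eq_true, and_true] at hnd
  simp only [List.mem_cons, List.not_mem_nil, or_false, forall_eq_or_imp, forall_eq] at hlt
  obtain ⟨ha, hb, hk, hc, hd⟩ := hlt
  have hab := hnd.1.1
  have hcd := hnd.2.2.2
  clear hnd
  rw [gg_one] at j1 j2
  rw [SS_eq _ _ _ _ (by clear j1 j2 hne; omega) (by clear j1 j2 hne; omega) (by clear j1 j2 hne; omega)
    (by clear j1 j2 hne; omega) (by clear j1 j2 hne; omega) (by clear j1 j2 hne; omega)] at j1
  rw [SS_eq _ _ _ _ (by clear j1 j2 hne; omega) (by clear j1 j2 hne; omega) (by clear j1 j2 hne; omega)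
    (by clear j1 j2 hne; omega) (by clear j1 j2 hne; omega) (by clear j1 j2 hne; omega)] at j2
  rw [vv_lt _ _ _ ha, vv_lt _ _ _ hb] at j1
  rw [vv_lt _ _ _ hc, vv_lt _ _ _ hd] at j2
  have e1 : vv v w 6 = w := by simp [vv]
  have e2 : vv v w' 6 = w' := by simp [vv]
  rw [e1] at j1
  rw [e2] at j2
  refine h.pf _ _ _ _ _ _ _ ?_ j1 (h.tri' _ _ _ ht) j2
  rw [mem_UU] at hw hw'
  push Not at hw hw'
  have q1 : ∀ i < 6, w ≠ v i := fun i hi => (hw i hi).symm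
  simp only [List.nodup_cons, List.mem_cons, List.not_mem_nil, or_false, not_or,
      List.nodup_nil, not_false_eq_true, and_true] at hnd2 ⊢
  obtain ⟨⟨_, _, _, _⟩, ⟨_, _, _⟩, ⟨_, _⟩, _⟩ := hnd2
  exact ⟨⟨q1 a ha, q1 b hb, q1 k hk, q1 c hc, q1 d hd, hne⟩,
    ⟨by assumption, by assumption, by assumption, by assumption, hw' a ha⟩,
    ⟨by assumption, by assumption, by assumption, hw' b hb⟩,
    ⟨by assumption, by assumption, hw' k hk⟩, ⟨by assumption, hw' c hc⟩, hw' d hd⟩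

theorem Su.excls {V E v} (h : Su V E v) {w w' : ℕ} (hw : w ∉ UU v) (hw' : w' ∉ UU v)
    (hne : w ≠ w') :
    let g := gg E (vv v w)
    let g' := gg E (vv v w')
    (g 73 + g' 70 ≤ 1 ∧ g 73 + g' 82 ≤ 1 ∧ g 73 + g' 100 ≤ 1) ∧
    (g 82 + g' 69 ≤ 1 ∧ g 82 + g' 73 ≤ 1 ∧ g 82 + g' 100 ≤ 1) ∧
    (g 100 + g' 67 ≤ 1 ∧ g 100 + g' 73 ≤ 1 ∧ g 100 + g' 82 ≤ 1) := by
  intro g g'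
  have X := fun a b k c d p q r => h.excl hw hw' hne a b k c d p q r
  refine ⟨⟨?_, ?_, ?_⟩, ⟨?_, ?_, ?_⟩, ⟨?_, ?_, ?_⟩⟩
  · exact X 3 0 5 1 2 (by decide) (by decide) (by decide)
  · exact X 3 0 5 1 4 (by decide) (by decide) (by decide)
  · exact X 3 0 4 2 5 (by decide) (by decide) (by decide)
  · exact X 4 1 5 0 2 (by decide) (by decide) (by decide)
  · exact X 4 1 5 0 3 (by decide) (by decide) (by decide)
  · exact X 4 1 3 2 5 (by decide) (by decide) (by decide)
  · exact X 5 2 4 0 1 (by decide) (by decide) (by decide)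
  · exact X 5 2 4 0 3 (by decide) (by decide) (by decide)
  · exact X 5 2 3 1 4 (by decide) (by decide) (by decide)

/-! ### The extremal graphs -/

theorem mem_G1 (n : ℕ) (e : Finset ℕ) : e ∈ (G1 n).edges ↔ e = {0, 1, 2} ∨
    (e ⊆ Finset.range n ∧ e.card = 3 ∧ 3 ∈ e ∧ (0 ∈ e ∨ 1 ∈ e ∨ 2 ∈ e)) := by
  have : (e ∩ ({0, 1, 2} : Finset ℕ)).Nonempty ↔ (0 ∈ e ∨ 1 ∈ e ∨ 2 ∈ e) := by
    constructor
    · rintro ⟨x, hx⟩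
      simp only [Finset.mem_inter, Finset.mem_insert, Finset.mem_singleton] at hx
      obtain ⟨hx, rfl | rfl | rfl⟩ := hx <;> tauto
    · rintro (h | h | h)
      · exact ⟨0, by simp [h]⟩
      · exact ⟨1, by simp [h]⟩
      · exact ⟨2, by simp [h]⟩
  simp only [G1, Finset.mem_insert, Finset.mem_filter, Finset.mem_powersetCard, this, and_assoc]

theorem mem_G2 (n : ℕ) (hn : 3 ≤ n) (e : Finset ℕ) : e ∈ (G2 n).edges ↔
    (e ⊆ Finset.range n ∧ e.card = 3 ∧ ((0 ∈ e ∧ 1 ∈ e) ∨ (0 ∈ e ∧ 2 ∈ e) ∨ (1 ∈ e ∧ 2 ∈ e))) := by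
  simp only [G2, Finset.mem_insert, Finset.mem_filter, Finset.mem_powersetCard, and_assoc]
  rw [Finset.inter_comm]
  constructor
  · rintro (rfl | ⟨h1, h2, h3⟩)
    · refine ⟨?_, rfl, by simp⟩
      intro x hx
      simp only [Finset.mem_insert, Finset.mem_singleton] at hx
      simp only [Finset.mem_range]; omega
    · refine ⟨h1, h2, ?_⟩
      by_cases a0 : 0 ∈ e <;> by_cases a1 : 1 ∈ e <;> by_cases a2 : 2 ∈ e <;>
        simp [Finset.insert_inter_of_mem, Finset.insert_inter_of_notMem, a0, a1, a2] at h3 ⊢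
  · rintro ⟨h1, h2, h3⟩
    by_cases hall : 0 ∈ e ∧ 1 ∈ e ∧ 2 ∈ e
    · left
      symm
      apply Finset.eq_of_subset_of_card_le
      · intro x hx
        simp only [Finset.mem_insert, Finset.mem_singleton] at hx
        rcases hx with rfl | rfl | rfl <;> tauto
      · rw [h2]; rfl
    · right
      refine ⟨h1, h2, ?_⟩
      by_cases a0 : 0 ∈ e <;> by_cases a1 : 1 ∈ e <;> by_cases a2 : 2 ∈ e <;>
        simp [Finset.insert_inter_of_mem, Finset.insert_inter_of_notMem, a0, a1, a2] at h3 hall ⊢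

theorem card_triple {a b c : ℕ} (h1 : a ≠ b) (h2 : a ≠ c) (h3 : b ≠ c) :
    ({a, b, c} : Finset ℕ).card = 3 := Finset.card_eq_three.2 ⟨a, b, c, h1, h2, h3, rfl⟩

theorem triple_third {e : Finset ℕ} (hc : e.card = 3) {a b c : ℕ} (ha : a ∈ e) (hb : b ∈ e)
    (hce : c ∈ e) (hab : a ≠ b) (hac : a ≠ c) (hbc : b ≠ c) : e = {a, b, c} := by
  symm
  apply Finset.eq_of_subset_of_card_le
  · intro x hx
    simp only [Finset.mem_insert, Finset.mem_singleton] at hx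
    rcases hx with rfl | rfl | rfl <;> assumption
  · rw [hc, card_triple hab hac hbc]

theorem sub_range_of_succ {n : ℕ} {e : Finset ℕ} (h : e ⊆ Finset.range (n + 1)) (hn : n ∉ e) :
    e ⊆ Finset.range n := by
  intro x hx
  have := Finset.mem_range.1 (h hx)
  have : x ≠ n := by rintro rfl; exact hn hx
  simp only [Finset.mem_range]; omega

theorem card_step (A B : Finset (Finset ℕ)) (n : ℕ) (p q r : Finset ℕ)
    (hB : ∀ e, e ∈ B ↔ e ∈ A ∨ e = p ∨ e = q ∨ e = r) (hA : ∀ e ∈ A, n ∉ e)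
    (hp : n ∈ p) (hq : n ∈ q) (hr : n ∈ r) (h1 : p ≠ q) (h2 : p ≠ r) (h3 : q ≠ r) :
    B.card = A.card + 3 := by
  have : B = A ∪ {p, q, r} := by
    ext e; rw [hB]; simp; tauto
  rw [this, Finset.card_union_of_disjoint, Finset.card_eq_three.2 ⟨p, q, r, h1, h2, h3, rfl⟩]
  rw [Finset.disjoint_left]
  intro e he he'
  simp only [Finset.mem_insert, Finset.mem_singleton] at he'
  rcases he' with rfl | rfl | rfl
  · exact hA _ he hp
  · exact hA _ he hq
  · exact hA _ he hr

theorem triple_sub {n a b c : ℕ} (ha : a < n) (hb : b < n) (hc : c < n) :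
    ({a, b, c} : Finset ℕ) ⊆ Finset.range n := by
  intro x hx
  simp only [Finset.mem_insert, Finset.mem_singleton] at hx
  simp only [Finset.mem_range]
  omega

theorem triple_ne {a b c d : ℕ} (h1 : c ≠ a) (h2 : c ≠ b) (h3 : c ≠ d) :
    ({a, b, c} : Finset ℕ) ≠ {a, b, d} := by
  intro h
  have : c ∈ ({a, b, d} : Finset ℕ) := by rw [← h]; simp
  simp only [Finset.mem_insert, Finset.mem_singleton] at this
  omega

theorem card_G1 (n : ℕ) (hn : 4 ≤ n) : (G1 n).edges.card = 3 * n - 8 := by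
  induction n, hn using Nat.le_induction with
  | base => decide +kernel
  | succ n hn ih =>
    rw [card_step (G1 n).edges (G1 (n + 1)).edges n {3, n, 0} {3, n, 1} {3, n, 2}, ih]
    · omega
    · intro e
      rw [mem_G1, mem_G1]
      constructor
      · rintro (rfl | ⟨h1, h2, h3, h4⟩)
        · simp
        · by_cases hne : n ∈ e
          · right
            rcases h4 with h4 | h4 | h4
            · left; exact triple_third h2 h3 hne h4 (by omega) (by omega) (by omega)
            · right; left; exact triple_third h2 h3 hne h4 (by omega) (by omega) (by omega)
            · right; right; exact triple_third h2 h3 hne h4 (by omega) (by omega) (by omega)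
          · left; right
            exact ⟨sub_range_of_succ h1 hne, h2, h3, h4⟩
      · rintro ((h | ⟨h1, h2⟩) | rfl | rfl | rfl)
        · exact Or.inl h
        · exact Or.inr ⟨h1.trans (Finset.range_mono (by omega)), h2⟩
        all_goals
          right
          exact ⟨triple_sub (by omega) (by omega) (by omega),
            card_triple (by omega) (by omega) (by omega), by simp, by simp⟩
    · intro e he hne
      rw [mem_G1] at he
      rcases he with rfl | ⟨h1, _⟩
      · simp at hne; omega
      · have := Finset.mem_range.1 (h1 hne); omega
    · simp
    · simp
    · simp
    all_goals exact triple_ne (by omega) (by omega) (by omega)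

theorem card_G2 (n : ℕ) (hn : 4 ≤ n) : (G2 n).edges.card = 3 * n - 8 := by
  induction n, hn using Nat.le_induction with
  | base => decide +kernel
  | succ n hn ih =>
    rw [card_step (G2 n).edges (G2 (n + 1)).edges n {0, n, 1} {0, n, 2} {1, n, 2}, ih]
    · omega
    · intro e
      rw [mem_G2 _ (by omega), mem_G2 _ (by omega)]
      constructor
      · rintro ⟨h1, h2, h4⟩
        by_cases hne : n ∈ e
        · right
          rcases h4 with h4 | h4 | h4
          · left; exact triple_third h2 h4.1 hne h4.2 (by omega) (by omega) (by omega)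
          · right; left; exact triple_third h2 h4.1 hne h4.2 (by omega) (by omega) (by omega)
          · right; right; exact triple_third h2 h4.1 hne h4.2 (by omega) (by omega) (by omega)
        · left
          exact ⟨sub_range_of_succ h1 hne, h2, h4⟩
      · rintro (⟨h1, h2⟩ | rfl | rfl | rfl)
        · exact ⟨h1.trans (Finset.range_mono (by omega)), h2⟩
        all_goals
          exact ⟨triple_sub (by omega) (by omega) (by omega),
            card_triple (by omega) (by omega) (by omega), by simp⟩
    · intro e he hne
      rw [mem_G2 _ (by omega)] at he
      have := Finset.mem_range.1 (he.1 hne); omega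
    · simp
    · simp
    · simp
    · exact triple_ne (by omega) (by omega) (by omega)
    · intro h
      have : 0 ∈ ({1, n, 2} : Finset ℕ) := by rw [← h]; simp
      simp at this; omega
    · intro h
      have : 0 ∈ ({1, n, 2} : Finset ℕ) := by rw [← h]; simp
      simp at this; omega

theorem exists_label (V : Finset ℕ) (n k : ℕ) (hV : V.card = n) (hk : k ≤ n) (p : ℕ → ℕ)
    (hinj : ∀ i < k, ∀ j < k, p i = p j → i = j) (hmem : ∀ i < k, p i ∈ V) :
    ∃ φ : ℕ → ℕ, Set.InjOn φ ↑(Finset.range n) ∧ (Finset.range n).image φ = V ∧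
      ∀ i < k, φ i = p i := by
  classical
  obtain ⟨g, hg⟩ := Finset.exists_equiv_extend_of_card_eq (α := Fin n) (t := V)
    (by simp [hV]) (s := Finset.univ.filter (fun i : Fin n => (i : ℕ) < k))
    (f := fun i => p i)
    (by
      intro x hx
      simp only [Finset.mem_image, Finset.mem_filter, Finset.mem_univ, true_and] at hx
      obtain ⟨i, hi, rfl⟩ := hx
      exact hmem i hi)
    (by
      intro i hi j hj hij
      simp only [Finset.coe_filter, Finset.mem_univ, true_and, Set.mem_ofPred_eq] at hi hj
      exact Fin.ext (hinj i hi j hj hij))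
  have hφ : ∀ i (h : i < n), (fun i => if h : i < n then (g ⟨i, h⟩ : ℕ) else 0) i = g ⟨i, h⟩ := by
    intro i h
    simp [h]
  refine ⟨fun i => if h : i < n then (g ⟨i, h⟩ : ℕ) else 0, ?_, ?_, ?_⟩
  · intro i hi j hj hij
    have hi' : i < n := by simpa using hi
    have hj' : j < n := by simpa using hj
    rw [hφ i hi', hφ j hj'] at hij
    have := g.injective (Subtype.ext hij)
    simpa using this
  · ext x
    simp only [Finset.mem_image, Finset.mem_range]
    constructor
    · rintro ⟨i, hi, rfl⟩
      rw [dif_pos hi]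
      exact (g ⟨i, hi⟩).2
    · intro hx
      refine ⟨(g.symm ⟨x, hx⟩ : Fin n), (g.symm ⟨x, hx⟩).2, ?_⟩
      simp
  · intro i hi
    have hi' : i < n := by omega
    rw [hφ i hi']
    exact hg ⟨i, hi'⟩ (by simp [hi])

theorem iso_of (n : ℕ) (G H : ThreeGraph) (hG : G.verts = Finset.range n) (φ : ℕ → ℕ)
    (hinj : Set.InjOn φ ↑(Finset.range n)) (himg : (Finset.range n).image φ = H.verts)
    (hval : H.IsValid) (hcard : G.edges.card = H.edges.card)
    (hsub : ∀ t : Finset ℕ, t ⊆ Finset.range n → t.card = 3 → t.image φ ∈ H.edges →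
      (∀ i < n, φ i ∈ t.image φ → i ∈ t) → t ∈ G.edges) :
    ThreeGraph.IsoCopy G H := by
  refine ⟨φ, by rw [hG]; exact hinj, by rw [hG]; exact himg, ?_⟩
  symm
  apply Finset.eq_of_subset_of_card_le
  · intro e he
    obtain ⟨h1, h2⟩ := hval e he
    have hte : ((Finset.range n).filter (fun i => φ i ∈ e)).image φ = e := by
      ext x
      simp only [Finset.mem_image, Finset.mem_filter]
      constructor
      · rintro ⟨i, ⟨_, hi⟩, rfl⟩
        exact hi
      · intro hx
        have := h2 hx
        rw [← himg] at this
        obtain ⟨i, hi, rfl⟩ := Finset.mem_image.1 this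
        exact ⟨i, ⟨hi, hx⟩, rfl⟩
    refine Finset.mem_image.2 ⟨(Finset.range n).filter (fun i => φ i ∈ e), ?_, hte⟩
    apply hsub
    · exact Finset.filter_subset _ _
    · rw [← h1, ← Finset.card_image_of_injOn (f := φ), hte]
      exact hinj.mono (by intro x hx; exact (Finset.mem_filter.1 hx).1)
    · rw [hte]; exact he
    · intro i hi hie
      rw [hte] at hie
      exact Finset.mem_filter.2 ⟨Finset.mem_range.2 hi, hie⟩
  · rw [← hcard]; exact Finset.card_image_le

theorem iso_G2 (n : ℕ) (hn : 4 ≤ n) (H : ThreeGraph) (hval : H.IsValid) (hV : H.verts.card = n)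
    (hcard : H.edges.card = 3 * n - 8) (p : ℕ → ℕ)
    (hinj : ∀ i < 3, ∀ j < 3, p i = p j → i = j) (hmem : ∀ i < 3, p i ∈ H.verts)
    (hE : ∀ e ∈ H.edges, (p 0 ∈ e ∧ p 1 ∈ e) ∨ (p 0 ∈ e ∧ p 2 ∈ e) ∨ (p 1 ∈ e ∧ p 2 ∈ e)) :
    ThreeGraph.IsoCopy (G2 n) H := by
  obtain ⟨φ, h1, h2, h3⟩ := exists_label H.verts n 3 hV (by omega) p hinj hmem
  refine iso_of n (G2 n) H rfl φ h1 h2 hval (by rw [card_G2 n hn, hcard]) ?_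
  intro t ht htc hte hback
  rw [mem_G2 n (by omega)]
  refine ⟨ht, htc, ?_⟩
  have := hE _ hte
  rw [← h3 0 (by omega), ← h3 1 (by omega), ← h3 2 (by omega)] at this
  have b0 := hback 0 (by omega)
  have b1 := hback 1 (by omega)
  have b2 := hback 2 (by omega)
  tauto

theorem iso_G1 (n : ℕ) (hn : 4 ≤ n) (H : ThreeGraph) (hval : H.IsValid) (hV : H.verts.card = n)
    (hcard : H.edges.card = 3 * n - 8) (p : ℕ → ℕ)
    (hinj : ∀ i < 4, ∀ j < 4, p i = p j → i = j) (hmem : ∀ i < 4, p i ∈ H.verts)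
    (hE : ∀ e ∈ H.edges, (p 0 ∈ e ∧ p 1 ∈ e ∧ p 2 ∈ e) ∨
      (p 3 ∈ e ∧ (p 0 ∈ e ∨ p 1 ∈ e ∨ p 2 ∈ e))) :
    ThreeGraph.IsoCopy (G1 n) H := by
  obtain ⟨φ, h1, h2, h3⟩ := exists_label H.verts n 4 hV (by omega) p hinj hmem
  refine iso_of n (G1 n) H rfl φ h1 h2 hval (by rw [card_G1 n hn, hcard]) ?_
  intro t ht htc hte hback
  rw [mem_G1 n]
  have := hE _ hte
  rw [← h3 0 (by omega), ← h3 1 (by omega), ← h3 2 (by omega), ← h3 3 (by omega)] at this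
  have b0 := hback 0 (by omega)
  have b1 := hback 1 (by omega)
  have b2 := hback 2 (by omega)
  have b3 := hback 3 (by omega)
  rcases this with ⟨x, y, z⟩ | ⟨x, y⟩
  · left
    exact triple_third htc (b0 x) (b1 y) (b2 z) (by omega) (by omega) (by omega)
  · right
    exact ⟨ht, htc, b3 x, by tauto⟩

theorem card_of_iso (n : ℕ) (G H : ThreeGraph) (hG : G.verts = Finset.range n)
    (hsub : ∀ e ∈ G.edges, e ⊆ Finset.range n) (hiso : ThreeGraph.IsoCopy G H) :
    H.edges.card = G.edges.card := by
  obtain ⟨φ, h1, h2, h3⟩ := hiso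
  rw [← h3]
  apply Finset.card_image_of_injOn
  intro s hs t ht hst
  rw [hG] at h1
  have hs' := hsub s hs
  have ht' := hsub t ht
  have key : ∀ s t : Finset ℕ, s ⊆ Finset.range n → t ⊆ Finset.range n →
      s.image φ = t.image φ → s ⊆ t := by
    intro s t hs ht hst x hx
    have : φ x ∈ t.image φ := by rw [← hst]; exact Finset.mem_image_of_mem _ hx
    obtain ⟨y, hy, hyx⟩ := Finset.mem_image.1 this
    have := h1 (Finset.mem_coe.2 (ht hy)) (Finset.mem_coe.2 (hs hx)) hyx
    rwa [← this]
  exact Finset.Subset.antisymm (key s t hs' ht' hst) (key t s ht' hs' hst.symm)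

/-! ### Equality analysis -/

theorem LMasks_pick (g : ℕ → ℕ) (g1 : ∀ m, g m ≤ 1) (hL : LSum g = 3) (m : ℕ) (hm : m ∈ LMasks)
    (h : g m = 1) :
    (g 67 = 1 → g 69 = 1 → g 70 = 1 → m = 67 ∨ m = 69 ∨ m = 70) ∧
    (g 67 = 1 → g 69 = 1 → g 73 = 1 → m = 67 ∨ m = 69 ∨ m = 73) ∧
    (g 67 = 1 → g 70 = 1 → g 82 = 1 → m = 67 ∨ m = 70 ∨ m = 82) ∧
    (g 69 = 1 → g 70 = 1 → g 100 = 1 → m = 69 ∨ m = 70 ∨ m = 100) := by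
  unfold LSum at hL
  simp only [LMasks, Finset.mem_insert, Finset.mem_singleton] at hm
  rcases hm with rfl | rfl | rfl | rfl | rfl | rfl <;> omega

theorem mem_Smask_vv (v : ℕ → ℕ) (w m i : ℕ) (hi : i < 6) (hb : i ∈ bits m) :
    v i ∈ Smask (vv v w) m := by
  rw [← vv_lt v w i hi]
  exact Finset.mem_image_of_mem _ hb

theorem decT : ∀ m ∈ ({7, 11, 13, 14, 19, 21, 22, 35, 37, 38, 67, 69, 70} : Finset ℕ),
    (0 ∈ bits m ∧ 1 ∈ bits m) ∨ (0 ∈ bits m ∧ 2 ∈ bits m) ∨ (1 ∈ bits m ∧ 2 ∈ bits m) := by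
  decide +kernel

theorem decT2 : ({7, 11, 13, 14, 19, 21, 22, 35, 37, 38} : Finset ℕ) ⊆
    ({7, 11, 13, 14, 19, 21, 22, 35, 37, 38, 67, 69, 70} : Finset ℕ) := by decide +kernel

theorem decS : ∀ m ∈ ({7, 11, 13, 14, 19, 21, 25, 35, 37, 41} : Finset ℕ),
    (1 ∈ bits m ∧ 2 ∈ bits m ∧ 3 ∈ bits m) ∨
    (0 ∈ bits m ∧ (1 ∈ bits m ∨ 2 ∈ bits m ∨ 3 ∈ bits m)) := by
  decide +kernel

theorem Su.finT {V E v} (h : Su V E v) (w0 : ℕ) (hw0 : w0 ∈ V \ UU v)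
    (hall : ∀ w ∈ V \ UU v, LSum (gg E (vv v w)) = 3 ∧
      gg E (vv v w) 67 = 1 ∧ gg E (vv v w) 69 = 1 ∧ gg E (vv v w) 70 = 1) :
    ∀ e ∈ E, (v 0 ∈ e ∧ v 1 ∈ e) ∨ (v 0 ∈ e ∧ v 2 ∈ e) ∨ (v 1 ∈ e ∧ v 2 ∈ e) := by
  intro e he
  suffices hs : ∃ w, ∃ m ∈ ({7, 11, 13, 14, 19, 21, 22, 35, 37, 38, 67, 69, 70} : Finset ℕ),
      Smask (vv v w) m = e by
    obtain ⟨w, m, hm, rfl⟩ := hs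
    have m0 := mem_Smask_vv v w m 0 (by omega)
    have m1 := mem_Smask_vv v w m 1 (by omega)
    have m2 := mem_Smask_vv v w m 2 (by omega)
    have := decT m hm
    tauto
  by_cases hU : e ⊆ UU v
  · obtain ⟨m, hm, rfl⟩ := h.inside he hU
    obtain ⟨t1, t2, t3⟩ := h.tris w0
    obtain ⟨_, l1, l2, l3⟩ := hall w0 hw0
    refine ⟨w0, m, decT2 (coreT _ (h.nopath (Finset.mem_sdiff.1 hw0).2) t1 t2 t3 l1 l2 l3 m hm ?_),
      SS_vv _ _ _ hm⟩
    rw [gg_one, SS_vv _ _ _ hm]; exact he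
  · obtain ⟨w, hwe, hw⟩ := Finset.not_subset.1 hU
    obtain ⟨m, hm, rfl⟩ := h.outside he hwe hw
    obtain ⟨hL, l1, l2, l3⟩ := hall w (Finset.mem_sdiff.2 ⟨(h.val _ he).2 hwe, hw⟩)
    have := (LMasks_pick _ (gg_le _ _) hL m hm ((gg_one _ _ _).2 he)).1 l1 l2 l3
    refine ⟨w, m, ?_, rfl⟩
    rcases this with rfl | rfl | rfl <;> decide

theorem gg_pair (E : Finset (Finset ℕ)) (v : ℕ → ℕ) (w a b : ℕ) (ha : a < 6) (hb : b < 6)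
    (hab : a ≠ b) : gg E (vv v w) (2 ^ 6 + 2 ^ a + 2 ^ b) = 1 ↔ {w, v a, v b} ∈ E := by
  rw [gg_one, SS_eq _ _ _ _ (by omega) (by omega) (by omega) (by omega) (by omega) hab,
    vv_lt _ _ _ ha, vv_lt _ _ _ hb]
  simp [vv]

theorem Su.finS {V E v} (h : Su V E v) (w0 : ℕ) (hw0 : w0 ∉ UU v)
    (h1 : {w0, v 0, v 1} ∈ E) (h2 : {w0, v 0, v 2} ∈ E) (h3 : {w0, v 0, v 3} ∈ E)
    (hout : ∀ e ∈ E, ∀ w ∈ e, w ∉ UU v → v 0 ∈ e ∧ (v 1 ∈ e ∨ v 2 ∈ e ∨ v 3 ∈ e)) :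
    ∀ e ∈ E, (v 1 ∈ e ∧ v 2 ∈ e ∧ v 3 ∈ e) ∨
      (v 0 ∈ e ∧ (v 1 ∈ e ∨ v 2 ∈ e ∨ v 3 ∈ e)) := by
  intro e he
  by_cases hU : e ⊆ UU v
  · obtain ⟨m, hm, rfl⟩ := h.inside he hU
    obtain ⟨t1, t2, t3⟩ := h.tris w0
    have l1 := (gg_pair E v w0 0 1 (by omega) (by omega) (by omega)).2 h1
    have l2 := (gg_pair E v w0 0 2 (by omega) (by omega) (by omega)).2 h2
    have l3 := (gg_pair E v w0 0 3 (by omega) (by omega) (by omega)).2 h3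
    have hmm := coreS _ (h.nopath hw0) t1 t2 t3 l1 l2 l3 m hm
      (by rw [gg_one, SS_vv _ _ _ hm]; exact he)
    have := decS m hmm
    have mm : ∀ i, i ∈ bits m → v i ∈ Smask v m := fun i hi => Finset.mem_image_of_mem _ hi
    rcases this with ⟨a, b, c⟩ | ⟨a, b | b | b⟩
    · exact Or.inl ⟨mm 1 a, mm 2 b, mm 3 c⟩
    · exact Or.inr ⟨mm 0 a, Or.inl (mm 1 b)⟩
    · exact Or.inr ⟨mm 0 a, Or.inr (Or.inl (mm 2 b))⟩
    · exact Or.inr ⟨mm 0 a, Or.inr (Or.inr (mm 3 b))⟩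
  · obtain ⟨w, hwe, hw⟩ := Finset.not_subset.1 hU
    exact Or.inr (hout e he w hwe hw)

/-- rotation of the labels of the triangle -/
def rot (i : ℕ) : ℕ :=
  if i = 0 then 1 else if i = 1 then 2 else if i = 2 then 0 else
  if i = 3 then 4 else if i = 4 then 5 else if i = 5 then 3 else i

theorem rot_lt (i : ℕ) (hi : i < 6) : rot i < 6 := by unfold rot; split_ifs <;> omega

theorem rot_inj (i j : ℕ) (h : rot i = rot j) : i = j := by
  unfold rot at h; split_ifs at h <;> omega

theorem rot_tri : ∀ t ∈ triIdx, t.image rot ∈ triIdx := by decide +kernel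

theorem rot_range : (Finset.range 6).image rot = Finset.range 6 := by decide +kernel

theorem UU_rot (v : ℕ → ℕ) : UU (fun i => v (rot i)) = UU v := by
  have : UU (fun i => v (rot i)) = ((Finset.range 6).image rot).image v := by
    rw [Finset.image_image]; rfl
  rw [this, rot_range]; rfl

theorem Su.rotate {V E v} (h : Su V E v) : Su V E (fun i => v (rot i)) where
  inj := fun i hi j hj hij => rot_inj i j (h.inj _ (rot_lt i hi) _ (rot_lt j hj) hij)
  mem := fun i hi => h.mem _ (rot_lt i hi)
  val := h.val
  pf := h.pf
  tri := by
    intro t ht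
    have := h.tri _ (rot_tri t ht)
    rwa [Finset.image_image] at this
  con := h.con

theorem isoS (n : ℕ) (hn : 7 ≤ n) (H : ThreeGraph) (hval : H.IsValid) (hV : H.verts.card = n)
    (hcard : H.edges.card = 3 * n - 8) (v : ℕ → ℕ) (h : Su H.verts H.edges v)
    (w0 : ℕ) (hw0 : w0 ∉ UU v)
    (h1 : {w0, v 0, v 1} ∈ H.edges) (h2 : {w0, v 0, v 2} ∈ H.edges)
    (h3 : {w0, v 0, v 3} ∈ H.edges)
    (hout : ∀ e ∈ H.edges, ∀ w ∈ e, w ∉ UU v → v 0 ∈ e ∧ (v 1 ∈ e ∨ v 2 ∈ e ∨ v 3 ∈ e)) :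
    ThreeGraph.IsoCopy (G1 n) H := by
  have key := h.finS w0 hw0 h1 h2 h3 hout
  refine iso_G1 n (by omega) H hval hV hcard (fun i => v (if i = 3 then 0 else i + 1)) ?_ ?_ ?_
  · intro i hi j hj hij
    have := h.inj _ (by split_ifs <;> omega) _ (by split_ifs <;> omega) hij
    split_ifs at this <;> omega
  · intro i hi
    exact h.mem _ (by split_ifs <;> omega)
  · intro e he
    exact key e he

/-- labels of the triangle in `triangleC` -/
def tau (i : ℕ) : ℕ :=
  if i = 0 then 0 else if i = 1 then 2 else if i = 2 then 4 else
  if i = 3 then 3 else if i = 4 then 5 else 1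

theorem tau_mem : ∀ i ∈ Finset.range 6, tau i ∈ triangleC.verts := by decide +kernel

theorem tau_inj : ∀ i ∈ Finset.range 6, ∀ j ∈ Finset.range 6, tau i = tau j → i = j := by
  decide +kernel

theorem tau_tri : ∀ t ∈ triIdx, t.image tau ∈ triangleC.edges := by decide +kernel

theorem exists_Su (H : ThreeGraph) (hval : H.IsValid) (hconn : H.Connected)
    (hP : H.Free pathP) (hC : H.ContainsCopy triangleC) : ∃ v, Su H.verts H.edges v := by
  obtain ⟨f, h1, h2, h3⟩ := hC
  refine ⟨fun i => f (tau i), ?_, ?_, hval, PF_of_free H hval hP, ?_, hconn⟩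
  · intro i hi j hj hij
    have hi' := Finset.mem_range.2 hi
    have hj' := Finset.mem_range.2 hj
    exact tau_inj i hi' j hj' (h1 (tau_mem i hi') (tau_mem j hj') hij)
  · intro i hi
    exact h2 _ (tau_mem i (Finset.mem_range.2 hi))
  · intro t ht
    have := h3 _ (tau_tri t ht)
    rwa [Finset.image_image] at this

theorem Su.card_out {V E v} (h : Su V E v) : (V \ UU v).card = V.card - 6 := by
  have h1 : UU v ⊆ V := by
    intro x hx
    obtain ⟨i, hi, rfl⟩ := mem_UU.1 hx
    exact h.mem i hi
  have h2 : (UU v).card = 6 := by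
    unfold UU
    rw [Finset.card_image_of_injOn, Finset.card_range]
    intro x hx y hy hxy
    exact h.inj x (by simpa using hx) y (by simpa using hy) hxy
  rw [Finset.card_sdiff_of_subset h1, h2]

/-- two outside vertices cannot both have more than three link edges. -/
theorem Su.le_three {V E v} (h : Su V E v) {w w' : ℕ} (hw : w ∈ V \ UU v) (hw' : w' ∈ V \ UU v)
    (hne : w ≠ w') (hle : LSum (gg E (vv v w')) ≤ LSum (gg E (vv v w))) :
    LSum (gg E (vv v w')) ≤ 3 := by
  have X := h.excls (Finset.mem_sdiff.1 hw).2 (Finset.mem_sdiff.1 hw').2 hne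
  have g1 := gg_le E (vv v w)
  have g2 := gg_le E (vv v w')
  generalize gg E (vv v w) = g at *
  generalize gg E (vv v w') = g' at *
  simp only at X
  unfold LSum at *
  have a1 := g1 67
  have a2 := g1 69
  have a3 := g1 70
  have a4 := g1 73
  have a5 := g1 82
  have a6 := g1 100
  have b1 := g2 67
  have b2 := g2 69
  have b3 := g2 70
  have b4 := g2 73
  have b5 := g2 82
  have b6 := g2 100
  omega

theorem Su.bound {V E v} (h : Su V E v) (n : ℕ) (hV : V.card = n) (hn : 7 ≤ n) :
    E.card ≤ 3 * n - 8 ∧ (E.card = 3 * n - 8 → USum (gg E v) = 10 ∧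
      ∀ w ∈ V \ UU v, LSum (gg E (vv v w)) = 3) := by
  have hout := h.card_out
  rw [hV] at hout
  have hne : (V \ UU v).Nonempty := by rw [← Finset.card_pos]; omega
  obtain ⟨w0, hw0, hmax⟩ := Finset.exists_max_image (V \ UU v) (fun w => LSum (gg E (vv v w))) hne
  have hcount := h.count
  have hcore := h.core hw0
  simp only at hcore
  have hsplit := Finset.add_sum_erase (V \ UU v) (fun w => LSum (gg E (vv v w))) hw0
  have hrest : ∑ w ∈ (V \ UU v).erase w0, LSum (gg E (vv v w)) ≤ (n - 7) * 3 := by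
    have : ((V \ UU v).erase w0).card = n - 7 := by
      rw [Finset.card_erase_of_mem hw0, hout]; omega
    rw [← this, ← smul_eq_mul]
    apply Finset.sum_le_card_nsmul
    intro w hw
    rw [Finset.mem_erase] at hw
    exact h.le_three hw0 hw.2 hw.1.symm (hmax w hw.2)
  constructor
  · rcases hcore with hc | ⟨hc, _⟩ <;> omega
  · intro heq
    rcases hcore with hc | ⟨hc, hL3, _⟩
    · omega
    · have hU : USum (gg E v) = 10 := by omega
      refine ⟨hU, ?_⟩
      have hle : ∀ w ∈ V \ UU v, LSum (gg E (vv v w)) ≤ 3 := by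
        intro w hw
        have := hmax w hw
        omega
      have hsum : ∑ w ∈ V \ UU v, LSum (gg E (vv v w)) = ∑ w ∈ V \ UU v, 3 := by
        have hle' := Finset.sum_le_sum hle
        rw [Finset.sum_const, smul_eq_mul, hout] at *
        omega
      exact (Finset.sum_eq_sum_iff_of_le hle).1 hsum

theorem Su.classify {H : ThreeGraph} {v : ℕ → ℕ} (h : Su H.verts H.edges v) (n : ℕ)
    (hval : H.IsValid)
    (hV : H.verts.card = n) (hn : 7 ≤ n) (heq : H.edges.card = 3 * n - 8) :
    ThreeGraph.IsoCopy (G1 n) H ∨ ThreeGraph.IsoCopy (G2 n) H := by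
  obtain ⟨hU, hL⟩ := (h.bound n hV hn).2 heq
  have hout := h.card_out
  rw [hV] at hout
  obtain ⟨w0, hw0⟩ : (H.verts \ UU v).Nonempty := by rw [← Finset.card_pos]; omega
  have hw0' := (Finset.mem_sdiff.1 hw0).2
  have htype : ∀ w ∈ H.verts \ UU v,
      let g := gg H.edges (vv v w)
      ((g 67 = 1 ∧ g 69 = 1 ∧ g 70 = 1) ∨ (g 67 = 1 ∧ g 69 = 1 ∧ g 73 = 1) ∨
       (g 67 = 1 ∧ g 70 = 1 ∧ g 82 = 1) ∨ (g 69 = 1 ∧ g 70 = 1 ∧ g 100 = 1)) := by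
    intro w hw g
    have h1 := hL w hw
    rcases h.core hw with hc | ⟨_, _, hc⟩
    · omega
    · exact hc
  have hx : ∀ w ∈ H.verts \ UU v, w ≠ w0 → _ := fun w hw hne =>
    And.intro (h.excls hw0' (Finset.mem_sdiff.1 hw).2 hne.symm)
      (h.excls (Finset.mem_sdiff.1 hw).2 hw0' hne)
  have hpick : ∀ e ∈ H.edges, ∀ w ∈ e, w ∉ UU v → w ∈ H.verts \ UU v ∧
      ∃ m ∈ LMasks, Smask (vv v w) m = e ∧ gg H.edges (vv v w) m = 1 := by
    intro e he w hwe hw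
    obtain ⟨m, hm, hme⟩ := h.outside he hwe hw
    exact ⟨Finset.mem_sdiff.2 ⟨(h.val _ he).2 hwe, hw⟩, m, hm, hme, by rw [gg_one, hme]; exact he⟩
  rcases htype w0 hw0 with ht | ht | ht | ht
  · right
    refine iso_G2 n (by omega) H hval hV heq v (fun i hi j hj => h.inj i (by omega) j (by omega))
      (fun i hi => h.mem i (by omega)) (h.finT w0 hw0 ?_)
    intro w hw
    refine ⟨hL w hw, ?_⟩
    by_cases hww : w = w0
    · rw [hww]; exact ht
    · have h1 := htype w hw
      have h2 := hx w hw hww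
      simp only at h1 h2
      omega
  · left
    have hall : ∀ w ∈ H.verts \ UU v, gg H.edges (vv v w) 67 = 1 ∧ gg H.edges (vv v w) 69 = 1 ∧
        gg H.edges (vv v w) 73 = 1 := by
      intro w hw
      by_cases hww : w = w0
      · rw [hww]; exact ht
      · have h1 := htype w hw
        have h2 := hx w hw hww
        simp only at h1 h2
        omega
    refine isoS n hn H hval hV heq v h w0 hw0'
      ((gg_pair _ v w0 0 1 (by omega) (by omega) (by omega)).1 ht.1)
      ((gg_pair _ v w0 0 2 (by omega) (by omega) (by omega)).1 ht.2.1)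
      ((gg_pair _ v w0 0 3 (by omega) (by omega) (by omega)).1 ht.2.2) ?_
    intro e he w hwe hw
    obtain ⟨hwV, m, hm, rfl, hg⟩ := hpick e he w hwe hw
    obtain ⟨l1, l2, l3⟩ := hall w hwV
    have := (LMasks_pick _ (gg_le _ _) (hL w hwV) m hm hg).2.1 l1 l2 l3
    have M := fun i hi hb => mem_Smask_vv v w m i hi hb
    rcases this with rfl | rfl | rfl
    · exact ⟨M 0 (by omega) (by decide), Or.inl (M 1 (by omega) (by decide))⟩
    · exact ⟨M 0 (by omega) (by decide), Or.inr (Or.inl (M 2 (by omega) (by decide)))⟩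
    · exact ⟨M 0 (by omega) (by decide), Or.inr (Or.inr (M 3 (by omega) (by decide)))⟩
  · left
    have hall : ∀ w ∈ H.verts \ UU v, gg H.edges (vv v w) 67 = 1 ∧ gg H.edges (vv v w) 70 = 1 ∧
        gg H.edges (vv v w) 82 = 1 := by
      intro w hw
      by_cases hww : w = w0
      · rw [hww]; exact ht
      · have h1 := htype w hw
        have h2 := hx w hw hww
        simp only at h1 h2
        omega
    refine isoS n hn H hval hV heq _ h.rotate w0 (by rw [UU_rot]; exact hw0')
      ((gg_pair _ v w0 1 2 (by omega) (by omega) (by omega)).1 ht.2.1)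
      ((gg_pair _ v w0 1 0 (by omega) (by omega) (by omega)).1 ht.1)
      ((gg_pair _ v w0 1 4 (by omega) (by omega) (by omega)).1 ht.2.2) ?_
    intro e he w hwe hw
    rw [UU_rot] at hw
    obtain ⟨hwV, m, hm, rfl, hg⟩ := hpick e he w hwe hw
    obtain ⟨l1, l2, l3⟩ := hall w hwV
    have := (LMasks_pick _ (gg_le _ _) (hL w hwV) m hm hg).2.2.1 l1 l2 l3
    have M := fun i hi hb => mem_Smask_vv v w m i hi hb
    rcases this with rfl | rfl | rfl
    · exact ⟨M 1 (by omega) (by decide), Or.inr (Or.inl (M 0 (by omega) (by decide)))⟩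
    · exact ⟨M 1 (by omega) (by decide), Or.inl (M 2 (by omega) (by decide))⟩
    · exact ⟨M 1 (by omega) (by decide), Or.inr (Or.inr (M 4 (by omega) (by decide)))⟩
  · left
    have hall : ∀ w ∈ H.verts \ UU v, gg H.edges (vv v w) 69 = 1 ∧ gg H.edges (vv v w) 70 = 1 ∧
        gg H.edges (vv v w) 100 = 1 := by
      intro w hw
      by_cases hww : w = w0
      · rw [hww]; exact ht
      · have h1 := htype w hw
        have h2 := hx w hw hww
        simp only at h1 h2
        omega
    refine isoS n hn H hval hV heq _ h.rotate.rotate w0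
      (by rw [UU_rot (fun i => v (rot i)), UU_rot]; exact hw0')
      ((gg_pair _ v w0 2 0 (by omega) (by omega) (by omega)).1 ht.1)
      ((gg_pair _ v w0 2 1 (by omega) (by omega) (by omega)).1 ht.2.1)
      ((gg_pair _ v w0 2 5 (by omega) (by omega) (by omega)).1 ht.2.2) ?_
    intro e he w hwe hw
    rw [UU_rot (fun i => v (rot i)), UU_rot] at hw
    obtain ⟨hwV, m, hm, rfl, hg⟩ := hpick e he w hwe hw
    obtain ⟨l1, l2, l3⟩ := hall w hwV
    have := (LMasks_pick _ (gg_le _ _) (hL w hwV) m hm hg).2.2.2 l1 l2 l3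
    have M := fun i hi hb => mem_Smask_vv v w m i hi hb
    rcases this with rfl | rfl | rfl
    · exact ⟨M 2 (by omega) (by decide), Or.inl (M 0 (by omega) (by decide))⟩
    · exact ⟨M 2 (by omega) (by decide), Or.inr (Or.inl (M 1 (by omega) (by decide)))⟩
    · exact ⟨M 2 (by omega) (by decide), Or.inr (Or.inr (M 5 (by omega) (by decide)))⟩

/-- Every connected `P`-free 3-graph on `n ≥ 7` vertices containing the triangle `C`
has at most `3n - 8` edges, with equality exactly for `G₁(n)` and `G₂(n)`. -/
theorem conn_turan_triangle (n : ℕ) (hn : 7 ≤ n) (H : ThreeGraph)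
    (hval : H.IsValid) (hcard : H.verts.card = n) (hconn : H.Connected)
    (hP : H.Free pathP) (hC : H.ContainsCopy triangleC) :
    H.edges.card ≤ 3 * n - 8 ∧
    (H.edges.card = 3 * n - 8 ↔
      (ThreeGraph.IsoCopy (G1 n) H ∨ ThreeGraph.IsoCopy (G2 n) H)) := by
  obtain ⟨v, h⟩ := exists_Su H hval hconn hP hC
  refine ⟨(h.bound n hcard hn).1, fun heq => h.classify n hval hcard hn heq, ?_⟩
  rintro (hiso | hiso)
  · rw [card_of_iso n (G1 n) H rfl ?_ hiso, card_G1 n (by omega)]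
    intro e he
    rcases (mem_G1 n e).1 he with rfl | he
    · exact triple_sub (by omega) (by omega) (by omega)
    · exact he.1
  · rw [card_of_iso n (G2 n) H rfl ?_ hiso, card_G2 n (by omega)]
    intro e he
    exact ((mem_G2 n (by omega) e).1 he).1
end

section
/- For every n ≥ 7, every connected P-free 3-graph H on n vertices that contains a copy of the triangle C and a copy of M is contained in K_5^{+(n−5)}. Consequently, the maximum number of edges of such an H is n + 5, and this maximum is attained exactly by K_5^{+(n−5)}. -/
section Helpers

set_option maxHeartbeats 4000000 in
/-- Core form of `P`-freeness. -/
lemma noP_core {H : ThreeGraph} (hv : H.IsValid) (hP : H.Free pathP)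
    {e f g : Finset ℕ} (he : e ∈ H.edges) (hf : f ∈ H.edges) (hg : g ∈ H.edges) (x y : ℕ)
    (hxe : x ∈ e) (hxf : x ∈ f) (hyf : y ∈ f) (hyg : y ∈ g)
    (h1 : ∀ t ∈ e, t ∈ f → t = x) (h2 : ∀ t ∈ f, t ∈ g → t = y)
    (h3 : ∀ t ∈ e, t ∉ g) : False := by
  have hxy : x ≠ y := fun h => h3 x hxe (h ▸ hyg)
  have ce := (hv e he).1
  have cf := (hv f hf).1
  have cg := (hv g hg).1
  have ce' : (e.erase x).card = 2 := by rw [Finset.card_erase_of_mem hxe, ce]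
  have cg' : (g.erase y).card = 2 := by rw [Finset.card_erase_of_mem hyg, cg]
  have cf' : ((f.erase x).erase y).card = 1 := by
    rw [Finset.card_erase_of_mem (Finset.mem_erase.2 ⟨hxy.symm, hyf⟩),
      Finset.card_erase_of_mem hxf, cf]
  obtain ⟨a, b, hab, hE⟩ := Finset.card_eq_two.1 ce'
  obtain ⟨p, q, hpq, hG⟩ := Finset.card_eq_two.1 cg'
  obtain ⟨c, hF⟩ := Finset.card_eq_one.1 cf'
  have he' : e = {a, b, x} := by
    rw [← Finset.insert_erase hxe, hE]; grind
  have hg' : g = {y, p, q} := by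
    rw [← Finset.insert_erase hyg, hG]
  have hf' : f = {x, c, y} := by
    rw [← Finset.insert_erase hxf,
      ← Finset.insert_erase (Finset.mem_erase.2 ⟨hxy.symm, hyf⟩), hF]; grind
  have hax : a ≠ x := by
    have : a ∈ e.erase x := by rw [hE]; simp
    exact (Finset.mem_erase.1 this).1
  have hbx : b ≠ x := by
    have : b ∈ e.erase x := by rw [hE]; simp
    exact (Finset.mem_erase.1 this).1
  have hpy : p ≠ y := by
    have : p ∈ g.erase y := by rw [hG]; simp
    exact (Finset.mem_erase.1 this).1
  have hqy : q ≠ y := by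
    have : q ∈ g.erase y := by rw [hG]; simp
    exact (Finset.mem_erase.1 this).1
  have hc : c ≠ y ∧ c ≠ x := by
    have : c ∈ (f.erase x).erase y := by rw [hF]; simp
    simp at this; exact ⟨this.1, this.2.1⟩
  subst he' hg' hf'
  have hsube := (hv _ he).2
  have hsubf := (hv _ hf).2
  have hsubg := (hv _ hg).2
  have hnd : [a, b, x, c, y, p, q].Nodup := by
    simp at h1 h2 h3 ⊢
    grind
  apply hP
  refine ⟨fun i => [a, b, x, c, y, p, q].getD i 0, ?_, ?_, ?_⟩
  · intro i hi j hj hij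
    have hi' : i < 7 := by simp [pathP] at hi; omega
    have hj' : j < 7 := by simp [pathP] at hj; omega
    have := (List.Nodup.getElem_inj_iff hnd (i := i) (j := j) (hi := by simpa using hi')
      (hj := by simpa using hj')).1
    apply this
    simpa [List.getD_eq_getElem, hi', hj'] using hij
  · intro i hi
    simp [pathP] at hi
    simp [Finset.insert_subset_iff] at hsube hsubf hsubg
    rcases hi with rfl | rfl | rfl | rfl | rfl | rfl | rfl <;> simp [*]
  · intro i hi
    simp [pathP] at hi
    rcases hi with rfl | rfl | rfl
    · simpa [Finset.image_insert] using he
    · simpa [Finset.image_insert] using hf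
    · simpa [Finset.image_insert] using hg

lemma closed_of_connected {H : ThreeGraph} (hval : H.IsValid) (hc : H.Connected) (S : ℕ → Prop) (a : ℕ)
    (ha : a ∈ H.verts) (hS : S a)
    (hcl : ∀ f ∈ H.edges, ∀ x ∈ f, S x → ∀ y ∈ f, S y) : ∀ v ∈ H.verts, S v := by
  intro v hv
  have h := hc a ha v hv
  induction h with
  | refl => exact hS
  | tail _ h ih =>
    obtain ⟨e, he, h1, h2⟩ := h
    exact hcl e he _ h1 (ih ((hval e he).2 h1)) _ h2

lemma split_three (f K : Finset ℕ) (hf : f.card = 3) :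
    f ⊆ K ∨
    (∃ p q z, p ∈ K ∧ q ∈ K ∧ z ∉ K ∧ p ≠ q ∧ f = {p, q, z}) ∨
    (∃ p z z', p ∈ K ∧ z ∉ K ∧ z' ∉ K ∧ z ≠ z' ∧ f = {p, z, z'}) ∨
    (∀ t ∈ f, t ∉ K) := by
  obtain ⟨a, b, c, hab, hac, hbc, rfl⟩ := Finset.card_eq_three.1 hf
  by_cases ha : a ∈ K <;> by_cases hb : b ∈ K <;> by_cases hc : c ∈ K
  · left; simp [Finset.insert_subset_iff, *]
  · right; left; exact ⟨a, b, c, ha, hb, hc, hab, rfl⟩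
  · right; left; exact ⟨a, c, b, ha, hc, hb, hac, by grind⟩
  · right; right; left; exact ⟨a, b, c, ha, hb, hc, hbc, rfl⟩
  · right; left; exact ⟨b, c, a, hb, hc, ha, hbc, by grind⟩
  · right; right; left; exact ⟨b, a, c, hb, ha, hc, hac, by grind⟩
  · right; right; left; exact ⟨c, a, b, hc, ha, hb, hab, by grind⟩
  · right; right; right; simp [*]

set_option maxHeartbeats 4000000 in
/-- Final structure lemma. -/
lemma structure_final {H : ThreeGraph} (hv : H.IsValid) (hcon : H.Connected)
    (hP : H.Free pathP) (a b c d e v w : ℕ) (hnd : [a, b, c, d, e, v, w].Nodup)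
    (hG : {c, d, e} ∈ H.edges) (hV : {a, b, v} ∈ H.edges) (hW : {a, b, w} ∈ H.edges)
    (hB : {b, d, c} ∈ H.edges) (hD : {a, c, e} ∈ H.edges) :
    ∀ f ∈ H.edges, f ⊆ {a, b, c, d, e} ∨
      ∃ z, z ∉ ({a, b, c, d, e} : Finset ℕ) ∧ f = {a, b, z} := by
  simp only [List.nodup_cons, List.mem_cons, not_or, List.not_mem_nil, List.nodup_nil,
    not_false_eq_true, and_true] at hnd
  have other : ∀ z, ∃ u, u ≠ z ∧ {a, b, u} ∈ H.edges ∧ u ∉ ({a, b, c, d, e} : Finset ℕ) := by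
    intro z
    by_cases h : v = z
    · exact ⟨w, by grind, hW, by grind⟩
    · exact ⟨v, h, hV, by grind⟩
  have weak : ∀ f ∈ H.edges, (f ⊆ {a, b, c, d, e} ∨
      ∃ z, z ∉ ({a, b, c, d, e} : Finset ℕ) ∧ f = {a, b, z}) ∨
      ∀ t ∈ f, t ∉ ({a, b, c, d, e} : Finset ℕ) := by
    intro f hf
    rcases split_three f {a, b, c, d, e} (hv f hf).1 with h | ⟨p, q, z, hp, hq, hz, hpq, rfl⟩ |
      ⟨p, z, z', hp, hz, hz', hzz, rfl⟩ | h
    · exact Or.inl (Or.inl h)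
    · left; right
      refine ⟨z, hz, ?_⟩
      obtain ⟨u, huz, hu, hu'⟩ := other z
      simp only [Finset.mem_insert, Finset.mem_singleton, not_or] at hp hq hz hu'
      by_cases h1 : (p = a ∨ p = b) 
      · by_cases h2 : (q = a ∨ q = b)
        · grind
        · exfalso
          exact noP_core hv hP hu hf hG p q (by grind) (by grind) (by grind) (by grind)
            (by grind) (by grind) (by grind)
      · by_cases h2 : (q = a ∨ q = b)
        · exfalso
          exact noP_core hv hP hu hf hG q p (by grind) (by grind) (by grind) (by grind)
            (by grind) (by grind) (by grind)
        · exfalso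
          by_cases he : p = e ∨ q = e
          · by_cases hd : p = d ∨ q = d
            · exact noP_core hv hP hf hB hu d b (by grind) (by grind) (by grind) (by grind)
                (by grind) (by grind) (by grind)
            · exact noP_core hv hP hf hB hu c b (by grind) (by grind) (by grind) (by grind)
                (by grind) (by grind) (by grind)
          · exact noP_core hv hP hf hD hu c a (by grind) (by grind) (by grind) (by grind)
                (by grind) (by grind) (by grind)
    · exfalso
      simp only [Finset.mem_insert, Finset.mem_singleton, not_or] at hp hz hz'
      by_cases ha : p = a
      · exact noP_core hv hP hf hD hB a c (by grind) (by grind) (by grind) (by grind)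
                (by grind) (by grind) (by grind)
      by_cases hb : p = b
      · exact noP_core hv hP hf hB hD b c (by grind) (by grind) (by grind) (by grind)
                (by grind) (by grind) (by grind)
      by_cases hw : w = z ∨ w = z'
      · exact noP_core hv hP hG hf hW p w (by grind) (by grind) (by grind) (by grind)
                (by grind) (by grind) (by grind)
      · by_cases he : p = e
        · exact noP_core hv hP hf hD hW p a (by grind) (by grind) (by grind) (by grind)
                (by grind) (by grind) (by grind)
        · exact noP_core hv hP hf hB hW p b (by grind) (by grind) (by grind) (by grind)
                (by grind) (by grind) (by grind)
    · exact Or.inr h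
  have hall := closed_of_connected hv hcon
    (fun t => t ∈ ({a, b, c, d, e} : Finset ℕ) ∨ {a, b, t} ∈ H.edges) a
    ((hv _ hV).2 (by simp)) (Or.inl (by simp)) (by
      intro f hf x hx hSx y hy
      rcases weak f hf with (h | ⟨z, hz, rfl⟩) | h
      · exact Or.inl (h hy)
      · simp only [Finset.mem_insert, Finset.mem_singleton] at hy
        rcases hy with rfl | rfl | rfl
        · simp
        · simp
        · exact Or.inr hf
      · exfalso
        rcases hSx with hx' | hx'
        · exact h x hx hx'
        · simp only [Finset.mem_insert, Finset.mem_singleton, not_or] at h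
          exact noP_core hv hP hf hx' hD x a (by grind) (by grind) (by grind) (by grind)
                (by grind) (by grind) (by grind))
  intro f hf
  rcases weak f hf with h | h
  · exact h
  · exfalso
    obtain ⟨x, y, z, -, -, -, rfl⟩ := Finset.card_eq_three.1 (hv f hf).1
    have hx := hall x ((hv _ hf).2 (by simp))
    rcases hx with hx | hx
    · exact h x (by simp) hx
    · simp only [Finset.mem_insert, Finset.mem_singleton, not_or] at h
      exact noP_core hv hP hf hx hD x a (by grind) (by grind) (by grind) (by grind)
                (by grind) (by grind) (by grind)

/-- A labelled triangle. -/
def Tri (H : ThreeGraph) (U : Finset ℕ) (x1 x2 x3 y1 y2 y3 : ℕ) : Prop :=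
  [x1, x2, x3, y1, y2, y3].Nodup ∧ U = {x1, x2, x3, y1, y2, y3} ∧
  {x1, y3, x2} ∈ H.edges ∧ {x2, y1, x3} ∈ H.edges ∧ {x3, y2, x1} ∈ H.edges

lemma Tri.swap {H : ThreeGraph} {U : Finset ℕ} {x1 x2 x3 y1 y2 y3 : ℕ}
    (h : Tri H U x1 x2 x3 y1 y2 y3) : Tri H U x2 x1 x3 y2 y1 y3 := by
  obtain ⟨h1, h2, h3, h4, h5⟩ := h
  refine ⟨by grind, by rw [h2]; grind, ?_, ?_, ?_⟩
  · convert h3 using 1; grind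
  · convert h5 using 1; grind
  · convert h4 using 1; grind

lemma Tri.rot {H : ThreeGraph} {U : Finset ℕ} {x1 x2 x3 y1 y2 y3 : ℕ}
    (h : Tri H U x1 x2 x3 y1 y2 y3) : Tri H U x2 x3 x1 y2 y3 y1 := by
  obtain ⟨h1, h2, h3, h4, h5⟩ := h
  exact ⟨by grind, by rw [h2]; grind, h4, h5, h3⟩

set_option maxHeartbeats 4000000 in
lemma Tri.one {H : ThreeGraph} {U : Finset ℕ} {x1 x2 x3 y1 y2 y3 : ℕ}
    (h : Tri H U x1 x2 x3 y1 y2 y3) (hv : H.IsValid) (hP : H.Free pathP) {p z z' : ℕ}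
    (hp : p ∈ U) (hz : z ∉ U) (hz' : z' ∉ U) (hf : {p, z, z'} ∈ H.edges) : False := by
  have key : ∀ x1 x2 x3 y1 y2 y3 : ℕ, Tri H U x1 x2 x3 y1 y2 y3 → p ≠ x1 ∧ p ≠ y3 := by
    rintro x1 x2 x3 y1 y2 y3 ⟨hnd, hU, hA, hB, hD⟩
    subst hU
    simp only [List.nodup_cons, List.mem_cons, not_or, List.not_mem_nil, List.nodup_nil,
      not_false_eq_true, and_true] at hnd
    simp only [Finset.mem_insert, Finset.mem_singleton, not_or] at hp hz hz'
    constructor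
    · rintro rfl
      exact noP_core hv hP hf hA hB p x2 (by grind) (by grind) (by grind) (by grind)
                (by grind) (by grind) (by grind)
    · rintro rfl
      exact noP_core hv hP hf hA hB p x2 (by grind) (by grind) (by grind) (by grind)
                (by grind) (by grind) (by grind)
  have k1 := key _ _ _ _ _ _ h
  have k2 := key _ _ _ _ _ _ h.rot
  have k3 := key _ _ _ _ _ _ h.rot.rot
  rw [h.2.1] at hp
  simp only [Finset.mem_insert, Finset.mem_singleton, not_or] at hp
  grind

set_option maxHeartbeats 4000000 in
lemma Tri.two {H : ThreeGraph} {U : Finset ℕ} {x1 x2 x3 y1 y2 y3 : ℕ}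
    (h : Tri H U x1 x2 x3 y1 y2 y3) (hv : H.IsValid) (hP : H.Free pathP) {p q z : ℕ}
    (hp : p ∈ U) (hq : q ∈ U) (hpq : p ≠ q) (hz : z ∉ U) (hf : {p, q, z} ∈ H.edges) :
    ∃ x1 x2 x3 y1 y2 y3, Tri H U x1 x2 x3 y1 y2 y3 ∧
      (({p, q, z} : Finset ℕ) = {x1, x2, z} ∨ ({p, q, z} : Finset ℕ) = {x1, y1, z}) := by
  by_contra hcon
  push Not at hcon
  have key : ∀ x1 x2 x3 y1 y2 y3 : ℕ, Tri H U x1 x2 x3 y1 y2 y3 →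
      ¬ (p = x1 ∧ q = y3) ∧ ¬ (p = y3 ∧ q = x1) ∧
      ¬ (p = x1 ∧ q = x2) ∧ ¬ (p = x1 ∧ q = y1) ∧ ¬ (p = y1 ∧ q = x1) ∧
      ¬ (p = y1 ∧ q = y2) := by
    intro x1 x2 x3 y1 y2 y3 hT
    have hh := hcon _ _ _ _ _ _ hT
    obtain ⟨hnd, hU, hA, hB, hD⟩ := hT
    subst hU
    simp only [List.nodup_cons, List.mem_cons, not_or, List.not_mem_nil, List.nodup_nil,
      not_false_eq_true, and_true] at hnd
    simp only [Finset.mem_insert, Finset.mem_singleton, not_or] at hz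
    clear hp hq
    refine ⟨?_, ?_, ?_, ?_, ?_, ?_⟩
    · rintro ⟨rfl, rfl⟩
      exact noP_core hv hP hf hD hB p x3 (by grind) (by grind) (by grind) (by grind)
                (by grind) (by grind) (by grind)
    · rintro ⟨rfl, rfl⟩
      exact noP_core hv hP hf hD hB q x3 (by grind) (by grind) (by grind) (by grind)
                (by grind) (by grind) (by grind)
    · rintro ⟨rfl, rfl⟩; exact hh.1 rfl
    · rintro ⟨rfl, rfl⟩; exact hh.2 rfl
    · rintro ⟨rfl, rfl⟩; exact hh.2 (by grind)
    · rintro ⟨rfl, rfl⟩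
      exact noP_core hv hP hf hB hA p x2 (by grind) (by grind) (by grind) (by grind)
                (by grind) (by grind) (by grind)
  have k1 := key _ _ _ _ _ _ h
  have k2 := key _ _ _ _ _ _ h.rot
  have k3 := key _ _ _ _ _ _ h.rot.rot
  have k4 := key _ _ _ _ _ _ h.swap
  have k5 := key _ _ _ _ _ _ h.swap.rot
  have k6 := key _ _ _ _ _ _ h.swap.rot.rot
  rw [h.2.1] at hp hq
  simp only [Finset.mem_insert, Finset.mem_singleton, not_or] at hp hq
  clear key hcon hf
  rcases hp with hp | hp | hp | hp | hp | hp <;> rcases hq with hq | hq | hq | hq | hq | hq <;>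
    simp [hp, hq] at k1 k2 k3 k4 k5 k6 hpq

set_option maxHeartbeats 4000000 in
/-- Every edge lies in `U` or meets it in exactly two vertices. -/
lemma Tri.edges {H : ThreeGraph} {U : Finset ℕ} {x1 x2 x3 y1 y2 y3 : ℕ}
    (h : Tri H U x1 x2 x3 y1 y2 y3) (hv : H.IsValid) (hcon : H.Connected)
    (hP : H.Free pathP) : ∀ f ∈ H.edges, f ⊆ U ∨
      ∃ p q z, p ∈ U ∧ q ∈ U ∧ z ∉ U ∧ p ≠ q ∧ f = {p, q, z} := by
  have weak : ∀ f ∈ H.edges, (f ⊆ U ∨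
      ∃ p q z, p ∈ U ∧ q ∈ U ∧ z ∉ U ∧ p ≠ q ∧ f = {p, q, z}) ∨ ∀ t ∈ f, t ∉ U := by
    intro f hf
    rcases split_three f U (hv f hf).1 with h' | h' | ⟨p, z, z', hp, hz, hz', hzz, rfl⟩ | h'
    · exact Or.inl (Or.inl h')
    · exact Or.inl (Or.inr h')
    · exact (h.one hv hP hp hz hz' hf).elim
    · exact Or.inr h'
  have bad : ∀ f ∈ H.edges, (∀ t ∈ f, t ∉ U) → ∀ x ∈ f, ∀ p q, p ∈ U → q ∈ U → x ∉ U →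
      p ≠ q → {p, q, x} ∈ H.edges → False := by
    intro f hf hfU x hx p q hp hq hxU hpq hpqx
    obtain ⟨x1, x2, x3, y1, y2, y3, ⟨hnd, hU, hA, hB, hD⟩, ho⟩ := h.two hv hP hp hq hpq hxU hpqx
    subst hU
    simp only [List.nodup_cons, List.mem_cons, not_or, List.not_mem_nil, List.nodup_nil,
      not_false_eq_true, and_true] at hnd
    simp only [Finset.mem_insert, Finset.mem_singleton, not_or] at hxU hfU
    rcases ho with ho | ho <;> rw [ho] at hpqx
    · exact noP_core hv hP hf hpqx hB x x2 (by grind) (by grind) (by grind) (by grind)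
                (by grind) (by grind) (by grind)
    · exact noP_core hv hP hf hpqx hA x x1 (by grind) (by grind) (by grind) (by grind)
                (by grind) (by grind) (by grind)
  have hx1 : x1 ∈ U := by rw [h.2.1]; simp
  have hall := closed_of_connected hv hcon
    (fun t => t ∈ U ∨ ∃ p q, p ∈ U ∧ q ∈ U ∧ t ∉ U ∧ p ≠ q ∧ {p, q, t} ∈ H.edges) x1
    ((hv _ h.2.2.1).2 (by simp)) (Or.inl hx1) (by
      intro f hf x hx hSx y hy
      rcases weak f hf with (h | ⟨p, q, z, hp, hq, hz, hpq, rfl⟩) | h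
      · exact Or.inl (h hy)
      · simp only [Finset.mem_insert, Finset.mem_singleton] at hy
        rcases hy with rfl | rfl | rfl
        · exact Or.inl hp
        · exact Or.inl hq
        · exact Or.inr ⟨p, q, hp, hq, hz, hpq, hf⟩
      · exfalso
        rcases hSx with hx' | ⟨p, q, hp, hq, hz, hpq, hf'⟩
        · exact h x hx hx'
        · exact bad f hf h x hx p q hp hq hz hpq hf')
  intro f hf
  rcases weak f hf with h | h
  · exact h
  · exfalso
    obtain ⟨x, y, z, -, -, -, rfl⟩ := Finset.card_eq_three.1 (hv f hf).1
    have hx := hall x ((hv _ hf).2 (by simp))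
    rcases hx with hx | ⟨p, q, hp, hq, hz, hpq, hf'⟩
    · exact h x (by simp) hx
    · exact bad _ hf h x (by simp) p q hp hq hz hpq hf'

set_option maxHeartbeats 4000000 in
/-- A crossing edge and a disjoint edge determine everything. -/
lemma Tri.main {H : ThreeGraph} {U : Finset ℕ} {x1 x2 x3 y1 y2 y3 : ℕ}
    (h : Tri H U x1 x2 x3 y1 y2 y3) (hv : H.IsValid) (hcon : H.Connected)
    (hP : H.Free pathP) {p q z : ℕ}
    (hp : p ∈ U) (hq : q ∈ U) (hpq : p ≠ q) (hz : z ∉ U) (hf : {p, q, z} ∈ H.edges)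
    {g : Finset ℕ} (hg : g ∈ H.edges) (hfg : ∀ t ∈ ({p, q, z} : Finset ℕ), t ∉ g) :
    ∃ a b c d e, [a, b, c, d, e].Nodup ∧ ({a, b, c, d, e} : Finset ℕ) ⊆ H.verts ∧
      ∀ f ∈ H.edges, f ⊆ {a, b, c, d, e} ∨
        ∃ z, z ∉ ({a, b, c, d, e} : Finset ℕ) ∧ f = {a, b, z} := by
  have hgU := h.edges hv hcon hP g hg
  have hgc := (hv g hg).1
  obtain ⟨x1, x2, x3, y1, y2, y3, hT, ho⟩ := h.two hv hP hp hq hpq hz hf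
  obtain ⟨hnd, hU, hA, hB, hD⟩ := hT
  have hnd' := hnd
  simp only [List.nodup_cons, List.mem_cons, not_or, List.not_mem_nil, List.nodup_nil,
      not_false_eq_true, and_true] at hnd
  rcases ho with ho | ho <;> rw [ho] at hf hfg
  · have i1 : y1 ∈ g ↔ x3 ∈ g := by
      clear hgU h hp hq ho hpq hnd' hgc
      subst hU
      simp only [Finset.mem_insert, Finset.mem_singleton, not_or] at hz
      by_contra hne
      by_cases h1 : y1 ∈ g
      · exact noP_core hv hP hf hB hg x2 y1 (by grind) (by grind) (by grind) (by grind)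
                (by grind) (by grind) (by grind)
      · exact noP_core hv hP hf hB hg x2 x3 (by grind) (by grind) (by grind) (by grind)
                (by grind) (by grind) (by grind)
    have i2 : y2 ∈ g ↔ x3 ∈ g := by
      clear hgU h hp hq ho hpq hnd' hgc
      subst hU
      simp only [Finset.mem_insert, Finset.mem_singleton, not_or] at hz
      by_contra hne
      by_cases h1 : y2 ∈ g
      · exact noP_core hv hP hf hD hg x1 y2 (by grind) (by grind) (by grind) (by grind)
                (by grind) (by grind) (by grind)
      · exact noP_core hv hP hf hD hg x1 x3 (by grind) (by grind) (by grind) (by grind)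
                (by grind) (by grind) (by grind)
    have hx1 : x1 ∉ g := hfg x1 (by simp)
    have hx2 : x2 ∉ g := hfg x2 (by simp)
    by_cases hx3 : x3 ∈ g
    · have hgeq : {x3, y1, y2} = g := by
        apply Finset.eq_of_subset_of_card_le
        · simp [Finset.insert_subset_iff, *]
        · rw [hgc, Finset.card_eq_three.2]
          exact ⟨x3, y1, y2, by grind, by grind, by grind, rfl⟩
      rw [← hgeq] at hg
      have hA' : {x1, x2, y3} ∈ H.edges := by convert hA using 1; grind
      have hD' : {x1, x3, y2} ∈ H.edges := by convert hD using 1; grind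
      refine ⟨x1, x2, x3, y1, y2, by grind, ?_, structure_final hv hcon hP x1 x2 x3 y1 y2 y3 z
        (by subst hU; grind) hg hA' hf hB hD'⟩
      have s1 := (hv _ hA).2
      have s2 := (hv _ hg).2
      simp [Finset.insert_subset_iff] at s1 s2 ⊢
      simp [*]
    · exfalso
      rcases hgU with hgU | ⟨p', q', z', hp', hq', hz', hpq', rfl⟩
      · have : g ⊆ {y3} := by
          intro t ht
          have := hgU ht
          subst hU
          grind
        have := Finset.card_le_card this
        simp at this; omega
      · subst hU; grind
  · exfalso
    have i1 : x2 ∈ g ↔ y3 ∈ g := by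
      clear hgU h hp hq ho hpq hnd' hgc
      subst hU
      simp only [Finset.mem_insert, Finset.mem_singleton, not_or] at hz
      by_contra hne
      by_cases h1 : x2 ∈ g
      · exact noP_core hv hP hf hA hg x1 x2 (by grind) (by grind) (by grind) (by grind)
                (by grind) (by grind) (by grind)
      · exact noP_core hv hP hf hA hg x1 y3 (by grind) (by grind) (by grind) (by grind)
                (by grind) (by grind) (by grind)
    have i2 : x3 ∈ g ↔ y2 ∈ g := by
      clear hgU h hp hq ho hpq hnd' hgc
      subst hU
      simp only [Finset.mem_insert, Finset.mem_singleton, not_or] at hz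
      by_contra hne
      by_cases h1 : x3 ∈ g
      · exact noP_core hv hP hf hD hg x1 x3 (by grind) (by grind) (by grind) (by grind)
                (by grind) (by grind) (by grind)
      · exact noP_core hv hP hf hD hg x1 y2 (by grind) (by grind) (by grind) (by grind)
                (by grind) (by grind) (by grind)
    have hx1 : x1 ∉ g := hfg x1 (by simp)
    have hy1 : y1 ∉ g := hfg y1 (by simp)
    rcases hgU with hgU | ⟨p', q', z', hp', hq', hz', hpq', rfl⟩
    · have hsub : g ⊆ {x2, y3, x3, y2} := by
        intro t ht
        have := hgU ht
        subst hU
        grind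
      by_cases h2 : x2 ∈ g <;> by_cases h3 : x3 ∈ g
      · have : ({x2, y3, x3, y2} : Finset ℕ) ⊆ g := by
          simp [Finset.insert_subset_iff]; tauto
        have := Finset.card_le_card this
        rw [Finset.card_insert_of_notMem (by grind), Finset.card_insert_of_notMem (by grind),
          Finset.card_pair (by grind)] at this
        omega
      · have : g ⊆ {x2, y3} := by intro t ht; have := hsub ht; grind
        have := Finset.card_le_card this
        have := Finset.card_le_two (a := x2) (b := y3)
        omega
      · have : g ⊆ {x3, y2} := by intro t ht; have := hsub ht; grind
        have := Finset.card_le_card this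
        have := Finset.card_le_two (a := x3) (b := y2)
        omega
      · have : g ⊆ ∅ := by intro t ht; have := hsub ht; grind
        have := Finset.card_le_card this
        rw [Finset.card_empty] at this
        omega
    · subst hU
      by_cases h2 : x2 ∈ ({p', q', z'} : Finset ℕ)
      · have hE : {x2, y3, z'} ∈ H.edges := by
          convert hg using 1; grind
        exact noP_core hv hP hE hB hD x2 x3 (by grind) (by grind) (by grind) (by grind)
                (by grind) (by grind) (by grind)
      · have hE : {x3, y2, z'} ∈ H.edges := by
          convert hg using 1; grind
        exact noP_core hv hP hE hB hA x3 x2 (by grind) (by grind) (by grind) (by grind)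
                (by grind) (by grind) (by grind)

set_option maxHeartbeats 4000000 in
lemma structure_all {H : ThreeGraph} (hv : H.IsValid) (hcard : 7 ≤ H.verts.card)
    (hcon : H.Connected) (hP : H.Free pathP) (hC : H.ContainsCopy triangleC)
    (hM : H.ContainsCopy matchingM) :
    ∃ a b c d e, [a, b, c, d, e].Nodup ∧ ({a, b, c, d, e} : Finset ℕ) ⊆ H.verts ∧
      ∀ f ∈ H.edges, f ⊆ {a, b, c, d, e} ∨
        ∃ z, z ∉ ({a, b, c, d, e} : Finset ℕ) ∧ f = {a, b, z} := by
  obtain ⟨φ, hφ, hφv, hφe⟩ := hC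
  obtain ⟨ψ, hψ, hψv, hψe⟩ := hM
  have hT : Tri H {φ 0, φ 2, φ 4, φ 3, φ 5, φ 1} (φ 0) (φ 2) (φ 4) (φ 3) (φ 5) (φ 1) := by
    refine ⟨?_, rfl, ?_, ?_, ?_⟩
    · have : [φ 0, φ 2, φ 4, φ 3, φ 5, φ 1] = [0, 2, 4, 3, 5, 1].map φ := rfl
      rw [this]
      refine List.Nodup.map_on ?_ (by decide)
      intro x hx y hy hxy
      exact hφ (by simp at hx; simp [triangleC]; tauto) (by simp at hy; simp [triangleC]; tauto) hxy
    · simpa [Finset.image_insert] using hφe {0, 1, 2} (by simp [triangleC])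
    · simpa [Finset.image_insert] using hφe {2, 3, 4} (by simp [triangleC])
    · simpa [Finset.image_insert] using hφe {4, 5, 0} (by simp [triangleC])
  generalize φ 0 = x1, φ 2 = x2, φ 4 = x3, φ 3 = y1, φ 5 = y2, φ 1 = y3 at hT
  generalize hUd : ({x1, x2, x3, y1, y2, y3} : Finset ℕ) = U at hT
  have hUc : U.card = 6 := by
    have := List.toFinset_card_of_nodup hT.1
    simp at this
    rw [← hUd]; exact this
  have hUe := hT.edges hv hcon hP
  obtain ⟨g, g', hg, hg', hgg⟩ : ∃ g g', g ∈ H.edges ∧ g' ∈ H.edges ∧ Disjoint g g' := by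
    refine ⟨_, _, hψe {0, 1, 2} (by simp [matchingM]), hψe {3, 4, 5} (by simp [matchingM]), ?_⟩
    rw [Finset.disjoint_left]
    intro t ht ht'
    obtain ⟨i, hi, rfl⟩ := Finset.mem_image.1 ht
    obtain ⟨j, hj, hij⟩ := Finset.mem_image.1 ht'
    have hi2 : i ∈ (matchingM.verts : Set ℕ) := by
      simp at hi; simp [matchingM]; tauto
    have hj2 : j ∈ (matchingM.verts : Set ℕ) := by
      simp at hj; simp [matchingM]; tauto
    have := hψ hj2 hi2 hij
    subst this
    simp at hi hj; omega
  rw [Finset.disjoint_left] at hgg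
  rcases hUe g hg with hgU | ⟨p, q, z, hp, hq, hz, hpq, rfl⟩
  · rcases hUe g' hg' with hgU' | ⟨p, q, z, hp, hq, hz, hpq, rfl⟩
    · skip
      have hunion : g ∪ g' = U := by
        apply Finset.eq_of_subset_of_card_le (Finset.union_subset hgU hgU')
        rw [Finset.card_union_of_disjoint (Finset.disjoint_left.2 hgg), (hv g hg).1,
          (hv g' hg').1, hUc]
      have hex : ∃ f ∈ H.edges, ¬ f ⊆ U := by
        by_contra hno
        push Not at hno
        have hx1 : x1 ∈ U := by rw [← hUd]; simp
        have := closed_of_connected hv hcon (fun t => t ∈ U) x1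
          ((hv _ hT.2.2.1).2 (by simp)) hx1 (fun f hf x _ _ y hy => hno f hf hy)
        have := Finset.card_le_card (show H.verts ⊆ U from this)
        omega
      obtain ⟨f, hf, hfU⟩ := hex
      rcases hUe f hf with h | ⟨p, q, z, hp, hq, hz, hpq, rfl⟩
      · exact (hfU h).elim
      have hzg : z ∉ g := fun h => hz (hgU h)
      have hzg' : z ∉ g' := fun h => hz (hgU' h)
      have hp2 := hp
      have hq2 := hq
      rw [← hunion, Finset.mem_union] at hp2 hq2
      have hgg2 : ∀ t ∈ g', t ∉ g := fun t ht ht' => hgg ht' ht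
      clear hUd hUe hunion hfU hgU hgU' hUc hcard hψ hψv hψe hφ hφv hφe
      by_cases hpg : p ∈ g <;> by_cases hqg : q ∈ g
      · exact hT.main hv hcon hP hp hq hpq hz hf hg' (by grind)
      · exfalso
        exact noP_core hv hP hg hf hg' p q (by grind) (by grind) (by grind) (by grind)
                (by grind) (by grind) (by grind)
      · exfalso
        exact noP_core hv hP hg hf hg' q p (by grind) (by grind) (by grind) (by grind)
                (by grind) (by grind) (by grind)
      · exact hT.main hv hcon hP hp hq hpq hz hf hg (by grind)
    · exact hT.main hv hcon hP hp hq hpq hz hg' hg (fun t ht ht' => hgg ht' ht)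
  · exact hT.main hv hcon hP hp hq hpq hz hg hg' (fun t ht ht' => hgg ht ht')

end Helpers

section Second

lemma image_inj_aux {f : ℕ → ℕ} {V e e' : Finset ℕ} (hf : Set.InjOn f ↑V) (he : e ⊆ V)
    (he' : e' ⊆ V) (h : e.image f = e'.image f) : e = e' := by
  have key : ∀ e e' : Finset ℕ, e ⊆ V → e' ⊆ V → e.image f = e'.image f → e ⊆ e' := by
    intro e e' he he' h t ht
    have : f t ∈ e'.image f := h ▸ Finset.mem_image_of_mem f ht
    obtain ⟨s, hs, hst⟩ := Finset.mem_image.1 this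
    have := hf (he' hs) (he ht) hst
    exact this ▸ hs
  exact (key _ _ he he' h).antisymm (key _ _ he' he h.symm)

lemma image_image_injOn {H : ThreeGraph} (hv : H.IsValid) {f : ℕ → ℕ}
    (hf : Set.InjOn f ↑H.verts) : Set.InjOn (Finset.image f) ↑H.edges :=
  fun _ he _ he' h => image_inj_aux hf (hv _ he).2 (hv _ he').2 h

lemma card_le_of_copy {G H : ThreeGraph} (hv : H.IsValid) (h : G.ContainsCopy H) :
    H.edges.card ≤ G.edges.card := by
  obtain ⟨f, hf, -, he⟩ := h
  exact Finset.card_le_card_of_injOn (Finset.image f) he (image_image_injOn hv hf)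

lemma card_eq_of_iso {F H : ThreeGraph} (hv : F.IsValid) (h : ThreeGraph.IsoCopy F H) :
    H.edges.card = F.edges.card := by
  obtain ⟨f, hf, -, he⟩ := h
  rw [← he, Finset.card_image_of_injOn (image_image_injOn hv hf)]

lemma iso_of_copy {G H : ThreeGraph} (hv : H.IsValid) (h : G.ContainsCopy H)
    (hc : H.verts.card = G.verts.card) (hce : H.edges.card = G.edges.card) :
    ThreeGraph.IsoCopy G H := by
  obtain ⟨f, hf, hfv, he⟩ := h
  have hV : H.verts.image f = G.verts := by
    apply Finset.eq_of_subset_of_card_le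
    · intro t ht
      obtain ⟨s, hs, rfl⟩ := Finset.mem_image.1 ht
      exact hfv s hs
    · rw [Finset.card_image_of_injOn hf, hc]
  have hE : H.edges.image (Finset.image f) = G.edges := by
    apply Finset.eq_of_subset_of_card_le
    · intro t ht
      obtain ⟨s, hs, rfl⟩ := Finset.mem_image.1 ht
      exact he s hs
    · rw [Finset.card_image_of_injOn (image_image_injOn hv hf), hce]
  have hinv : ∀ t ∈ H.verts, Function.invFunOn f ↑H.verts (f t) = t := fun t ht =>
    hf.leftInvOn_invFunOn ht
  refine ⟨Function.invFunOn f ↑H.verts, ?_, ?_, ?_⟩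
  · rw [← hV]
    intro x hx y hy hxy
    simp only [Finset.coe_image, Set.mem_image, Finset.mem_coe] at hx hy
    obtain ⟨a, ha, rfl⟩ := hx
    obtain ⟨b, hb, rfl⟩ := hy
    rw [hinv a ha, hinv b hb] at hxy
    rw [hxy]
  · rw [← hV, Finset.image_image]
    ext t
    simp only [Finset.mem_image, Function.comp]
    constructor
    · rintro ⟨a, ha, rfl⟩
      rwa [hinv a ha]
    · intro ht
      exact ⟨t, ht, hinv t ht⟩
  · have hid : ∀ s ∈ H.edges,
        Finset.image (Function.invFunOn f ↑H.verts) (Finset.image f s) = s := by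
      intro s hs
      rw [Finset.image_image]
      have h1 : Finset.image (Function.invFunOn f ↑H.verts ∘ f) s = Finset.image id s := by
        apply Finset.image_congr
        intro t ht
        exact hinv t ((hv s hs).2 ht)
      rw [h1, Finset.image_id]
    rw [← hE, Finset.image_image]
    ext s
    simp only [Finset.mem_image, Function.comp]
    constructor
    · rintro ⟨a, ha, rfl⟩
      rwa [hid a ha]
    · intro hs
      exact ⟨s, hs, hid s hs⟩

lemma mem_K5 {t : ℕ} {e : Finset ℕ} : e ∈ (K5plus t).edges ↔
    (e ⊆ Finset.range 5 ∧ e.card = 3) ∨ ∃ v, (5 ≤ v ∧ v < 5 + t) ∧ {0, 1, v} = e := by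
  simp only [K5plus, Finset.mem_union, Finset.mem_powersetCard, Finset.mem_image, Finset.mem_Ico]

lemma K5_valid (t : ℕ) : (K5plus t).IsValid := by
  intro e he
  rcases mem_K5.1 he with ⟨h1, h2⟩ | ⟨v, hv, rfl⟩
  · refine ⟨h2, h1.trans ?_⟩
    simp only [K5plus]
    exact Finset.range_mono (by omega)
  · refine ⟨Finset.card_eq_three.2 ⟨0, 1, v, by omega, by omega, by omega, rfl⟩, ?_⟩
    intro x hx
    simp only [Finset.mem_insert, Finset.mem_singleton] at hx
    simp only [K5plus, Finset.mem_range]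
    omega

lemma K5_card (t : ℕ) : (K5plus t).edges.card = t + 10 := by
  simp only [K5plus]
  rw [Finset.card_union_of_disjoint, Finset.card_powersetCard, Finset.card_image_of_injOn]
  · simp [Nat.choose]; omega
  · intro a ha b hb hab
    simp only [Finset.coe_Ico, Set.mem_Ico] at ha hb
    have : a ∈ ({0, 1, b} : Finset ℕ) := by
      have h : a ∈ ({0, 1, a} : Finset ℕ) := by simp
      simp only at hab
      rwa [hab] at h
    simp only [Finset.mem_insert, Finset.mem_singleton] at this
    omega
  · rw [Finset.disjoint_left]
    intro e he he'
    obtain ⟨v, hv, rfl⟩ := Finset.mem_image.1 he'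
    have := (Finset.mem_powersetCard.1 he).1 (show v ∈ _ by simp)
    simp at this hv
    omega

lemma K5_conn (t : ℕ) : (K5plus t).Connected := by
  have key : ∀ v ∈ (K5plus t).verts, ∃ e ∈ (K5plus t).edges, 0 ∈ e ∧ v ∈ e := by
    intro v hv
    simp only [K5plus, Finset.mem_range] at hv
    by_cases h2 : v < 2
    · refine ⟨{0, 1, 2}, mem_K5.2 (Or.inl (by decide)), by simp, ?_⟩
      simp; omega
    · refine ⟨{0, 1, v}, mem_K5.2 ?_, by simp, by simp⟩
      by_cases h5 : v < 5
      · left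
        refine ⟨?_, Finset.card_eq_three.2 ⟨0, 1, v, by omega, by omega, by omega, rfl⟩⟩
        intro x hx
        simp only [Finset.mem_insert, Finset.mem_singleton] at hx
        simp only [Finset.mem_range]
        omega
      · right
        exact ⟨v, by omega, rfl⟩
  intro u hu v hv
  obtain ⟨e, he, h0, h1⟩ := key u hu
  obtain ⟨e', he', h0', h1'⟩ := key v hv
  exact (Relation.ReflTransGen.single ⟨e, he, h1, h0⟩).tail ⟨e', he', h0', h1'⟩

lemma K5_free (t : ℕ) : (K5plus t).Free pathP := by
  rintro ⟨f, hf, -, he⟩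
  have e1 := he {0, 1, 2} (by simp [pathP])
  have e2 := he {2, 3, 4} (by simp [pathP])
  have e3 := he {4, 5, 6} (by simp [pathP])
  have hinj : ∀ i < 7, ∀ j < 7, f i = f j → i = j := by
    intro i hi j hj h
    exact hf (by simp [pathP]; omega) (by simp [pathP]; omega) h
  have hd : ∀ e e' : Finset ℕ, e ⊆ Finset.range 7 → e' ⊆ Finset.range 7 → (e ∩ e').card ≤ 1 →
      (0 ∈ e.image f ∧ 1 ∈ e.image f) → (0 ∈ e'.image f ∧ 1 ∈ e'.image f) → False := by
    rintro e e' hs hs' hc ⟨h0, h1⟩ ⟨h0', h1'⟩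
    obtain ⟨a, ha, ha0⟩ := Finset.mem_image.1 h0
    obtain ⟨b, hb, hb1⟩ := Finset.mem_image.1 h1
    obtain ⟨a', ha', ha0'⟩ := Finset.mem_image.1 h0'
    obtain ⟨b', hb', hb1'⟩ := Finset.mem_image.1 h1'
    have haa := hinj a (Finset.mem_range.1 (hs ha)) a' (Finset.mem_range.1 (hs' ha'))
      (by rw [ha0, ha0'])
    have hbb := hinj b (Finset.mem_range.1 (hs hb)) b' (Finset.mem_range.1 (hs' hb'))
      (by rw [hb1, hb1'])
    subst haa hbb
    have hab := Finset.card_le_one.1 hc a (Finset.mem_inter.2 ⟨ha, ha'⟩) b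
      (Finset.mem_inter.2 ⟨hb, hb'⟩)
    rw [hab] at ha0
    omega
  have hbig : ∀ v, ¬ (∀ i < 7, f i ∈ insert v (Finset.range 5)) := by
    intro v h
    have := Finset.card_le_card_of_injOn (s := Finset.range 7) (t := insert v (Finset.range 5)) f
      (fun i hi => h i (by simpa using hi))
      (fun i hi j hj hij => hinj i (by simpa using hi) j (by simpa using hj) hij)
    have h2 := Finset.card_insert_le v (Finset.range 5)
    simp at this h2
    omega
  have hsplit : ∀ e : Finset ℕ, e.image f ∈ (K5plus t).edges →
      (∀ i ∈ e, f i ∈ Finset.range 5) ∨ ((0 ∈ e.image f ∧ 1 ∈ e.image f) ∧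
        ∃ v, ∀ i ∈ e, f i ∈ insert v (Finset.range 5)) := by
    intro e h
    rcases mem_K5.1 h with ⟨h1, -⟩ | ⟨v, -, h1⟩
    · exact Or.inl fun i hi => h1 (Finset.mem_image_of_mem f hi)
    · refine Or.inr ⟨?_, v, ?_⟩
      · rw [← h1]; simp
      · intro i hi
        have := Finset.mem_image_of_mem f hi
        rw [← h1] at this
        simp only [Finset.mem_insert, Finset.mem_singleton, Finset.mem_range] at this ⊢
        omega
  have hfin : ∀ v, (∀ i ∈ ({0, 1, 2} : Finset ℕ), f i ∈ insert v (Finset.range 5)) →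
      (∀ i ∈ ({2, 3, 4} : Finset ℕ), f i ∈ insert v (Finset.range 5)) →
      (∀ i ∈ ({4, 5, 6} : Finset ℕ), f i ∈ insert v (Finset.range 5)) → False := by
    intro v h1 h2 h3
    apply hbig v
    intro i hi
    interval_cases i
    · exact h1 0 (by simp)
    · exact h1 1 (by simp)
    · exact h1 2 (by simp)
    · exact h2 3 (by simp)
    · exact h2 4 (by simp)
    · exact h3 5 (by simp)
    · exact h3 6 (by simp)
  have up : ∀ {e : Finset ℕ} (v : ℕ), (∀ i ∈ e, f i ∈ Finset.range 5) →
      ∀ i ∈ e, f i ∈ insert v (Finset.range 5) :=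
    fun v h i hi => Finset.mem_insert_of_mem (h i hi)
  rcases hsplit _ e1 with h1 | ⟨g1, v1, h1⟩ <;> rcases hsplit _ e2 with h2 | ⟨g2, v2, h2⟩ <;>
    rcases hsplit _ e3 with h3 | ⟨g3, v3, h3⟩
  · exact hfin 0 (up 0 h1) (up 0 h2) (up 0 h3)
  · exact hfin v3 (up _ h1) (up _ h2) h3
  · exact hfin v2 (up _ h1) h2 (up _ h3)
  · exact hd _ _ (by decide) (by decide) (by decide) g2 g3
  · exact hfin v1 h1 (up _ h2) (up _ h3)
  · exact hd _ _ (by decide) (by decide) (by decide) g1 g3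
  · exact hd _ _ (by decide) (by decide) (by decide) g1 g2
  · exact hd _ _ (by decide) (by decide) (by decide) g1 g2

lemma K5_C (t : ℕ) (ht : 1 ≤ t) : (K5plus t).ContainsCopy triangleC := by
  refine ⟨fun i => [0, 5, 1, 2, 3, 4].getD i 0, ?_, ?_, ?_⟩
  · have : ∀ i ∈ triangleC.verts, ∀ j ∈ triangleC.verts,
        [0, 5, 1, 2, 3, 4].getD i 0 = [0, 5, 1, 2, 3, 4].getD j 0 → i = j := by decide
    intro i hi j hj h
    exact this i hi j hj h
  · have : ∀ i ∈ triangleC.verts, [0, 5, 1, 2, 3, 4].getD i 0 < 6 := by decide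
    intro i hi
    have := this i hi
    simp only [K5plus, Finset.mem_range]
    omega
  · intro e he
    simp only [triangleC, Finset.mem_insert, Finset.mem_singleton] at he
    rcases he with rfl | rfl | rfl
    · exact mem_K5.2 (Or.inr ⟨5, by omega, by decide⟩)
    · exact mem_K5.2 (Or.inl (by decide))
    · exact mem_K5.2 (Or.inl (by decide))

lemma K5_M (t : ℕ) (ht : 1 ≤ t) : (K5plus t).ContainsCopy matchingM := by
  refine ⟨fun i => [0, 5, 1, 2, 3, 4].getD i 0, ?_, ?_, ?_⟩
  · have : ∀ i ∈ matchingM.verts, ∀ j ∈ matchingM.verts,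
        [0, 5, 1, 2, 3, 4].getD i 0 = [0, 5, 1, 2, 3, 4].getD j 0 → i = j := by decide
    intro i hi j hj h
    exact this i hi j hj h
  · have : ∀ i ∈ matchingM.verts, [0, 5, 1, 2, 3, 4].getD i 0 < 6 := by decide
    intro i hi
    have := this i hi
    simp only [K5plus, Finset.mem_range]
    omega
  · intro e he
    simp only [matchingM, Finset.mem_insert, Finset.mem_singleton] at he
    rcases he with rfl | rfl
    · exact mem_K5.2 (Or.inr ⟨5, by omega, by decide⟩)
    · exact mem_K5.2 (Or.inl (by decide))

lemma copy_of_structure {H : ThreeGraph} (hv : H.IsValid) {n : ℕ} (hn : 7 ≤ n)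
    (hc : H.verts.card = n) (a b c d e : ℕ) (hnd : [a, b, c, d, e].Nodup)
    (hsub : ({a, b, c, d, e} : Finset ℕ) ⊆ H.verts)
    (hE : ∀ f ∈ H.edges, f ⊆ {a, b, c, d, e} ∨
        ∃ z, z ∉ ({a, b, c, d, e} : Finset ℕ) ∧ f = {a, b, z}) :
    (K5plus (n - 5)).ContainsCopy H := by
  have hcK : ({a, b, c, d, e} : Finset ℕ).card = 5 := by
    have := List.toFinset_card_of_nodup hnd
    simp at this
    exact this
  set L := (H.verts \ {a, b, c, d, e}).toList with hL
  have hlen : ([a, b, c, d, e] ++ L).length = n := by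
    rw [List.length_append, hL, Finset.length_toList, Finset.card_sdiff_of_subset hsub, hcK, hc]
    simp; omega
  have hmem : ∀ t, t ∈ H.verts → t ∈ [a, b, c, d, e] ++ L := by
    intro t ht
    by_cases h : t ∈ ({a, b, c, d, e} : Finset ℕ)
    · apply List.mem_append_left; simpa using h
    · apply List.mem_append_right; rw [hL, Finset.mem_toList]; exact Finset.mem_sdiff.2 ⟨ht, h⟩
  have hlt : ∀ t ∈ H.verts, ([a, b, c, d, e] ++ L).idxOf t < n := by
    intro t ht
    rw [← hlen]
    exact List.idxOf_lt_length_iff.2 (hmem t ht)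
  have hinj : Set.InjOn (fun t => ([a, b, c, d, e] ++ L).idxOf t) ↑H.verts := by
    intro x hx y hy hxy
    exact (List.idxOf_inj (hmem x hx)).1 hxy
  have hK : ∀ t ∈ ({a, b, c, d, e} : Finset ℕ), ([a, b, c, d, e] ++ L).idxOf t < 5 := by
    intro t ht
    have ht' : t ∈ [a, b, c, d, e] := by simpa using ht
    rw [List.idxOf_append_of_mem ht']
    exact List.idxOf_lt_length_iff.2 ht'
  refine ⟨fun t => ([a, b, c, d, e] ++ L).idxOf t, hinj, ?_, ?_⟩
  · intro t ht
    have := hlt t ht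
    simp only [K5plus, Finset.mem_range]
    omega
  · intro f hf
    rcases hE f hf with h | ⟨z, hz, rfl⟩
    · refine mem_K5.2 (Or.inl ⟨?_, ?_⟩)
      · intro x hx
        obtain ⟨s, hs, rfl⟩ := Finset.mem_image.1 hx
        exact Finset.mem_range.2 (hK s (h hs))
      · rw [Finset.card_image_of_injOn (hinj.mono (by exact_mod_cast (hv f hf).2)), (hv f hf).1]
    · have hzV : z ∈ H.verts := (hv _ hf).2 (by simp)
      have hz5 : 5 ≤ ([a, b, c, d, e] ++ L).idxOf z := by
        rw [List.idxOf_append_of_notMem (by simpa using hz)]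
        simp
      have hz' := hlt z hzV
      refine mem_K5.2 (Or.inr ⟨([a, b, c, d, e] ++ L).idxOf z, by omega, ?_⟩)
      have ha : ([a, b, c, d, e] ++ L).idxOf a = 0 := by simp
      have hab : a ≠ b := by simp at hnd; tauto
      have hb : ([a, b, c, d, e] ++ L).idxOf b = 1 := by
        simp [List.idxOf_cons, hab]
      rw [Finset.image_insert, Finset.image_insert, Finset.image_singleton, ha, hb]

end Second

/-- Every connected `P`-free 3-graph on `n ≥ 7` vertices containing both the triangle
`C` and the matching `M` is contained in `K_5^{+(n-5)}`; consequently the maximum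
number of edges of such a 3-graph is `n + 5`, attained exactly by `K_5^{+(n-5)}`. -/
theorem conn_turan_triangle_matching (n : ℕ) (hn : 7 ≤ n) :
    (∀ H : ThreeGraph, H.IsValid → H.verts.card = n → H.Connected →
      H.Free pathP → H.ContainsCopy triangleC → H.ContainsCopy matchingM →
      (K5plus (n - 5)).ContainsCopy H) ∧
    IsGreatest {m : ℕ | ∃ H : ThreeGraph, H.IsValid ∧ H.verts.card = n ∧
      H.Connected ∧ H.Free pathP ∧ H.ContainsCopy triangleC ∧
      H.ContainsCopy matchingM ∧ H.edges.card = m} (n + 5) ∧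
    (∀ H : ThreeGraph, H.IsValid → H.verts.card = n → H.Connected →
      H.Free pathP → H.ContainsCopy triangleC → H.ContainsCopy matchingM →
      (H.edges.card = n + 5 ↔ ThreeGraph.IsoCopy (K5plus (n - 5)) H)) := by
  have main : ∀ H : ThreeGraph, H.IsValid → H.verts.card = n → H.Connected →
      H.Free pathP → H.ContainsCopy triangleC → H.ContainsCopy matchingM →
      (K5plus (n - 5)).ContainsCopy H := by
    intro H hv hc hcon hP hC hM
    obtain ⟨a, b, c, d, e, hnd, hsub, hE⟩ := structure_all hv (by omega) hcon hP hC hM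
    exact copy_of_structure hv hn hc a b c d e hnd hsub hE
  have hcardE : (K5plus (n - 5)).edges.card = n + 5 := by rw [K5_card]; omega
  have hcardV : (K5plus (n - 5)).verts.card = n := by
    simp only [K5plus, Finset.card_range]; omega
  refine ⟨main, ⟨?_, ?_⟩, ?_⟩
  · exact ⟨K5plus (n - 5), K5_valid _, hcardV, K5_conn _, K5_free _, K5_C _ (by omega),
      K5_M _ (by omega), hcardE⟩
  · rintro m ⟨H, hv, hc, hcon, hP, hC, hM, rfl⟩
    rw [← hcardE]
    exact card_le_of_copy hv (main H hv hc hcon hP hC hM)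
  · intro H hv hc hcon hP hC hM
    constructor
    · intro h
      exact iso_of_copy hv (main H hv hc hcon hP hC hM) (by rw [hc, hcardV]) (by rw [h, hcardE])
    · intro h
      rw [card_eq_of_iso (K5_valid _) h, hcardE]
end
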